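/- Let R be a commutative noetherian local ring of depth t and with residue field k. Then there is a filtration add R = PD_0^0(R) ⊊ PD_0^1(R) ⊊ ⋯ ⊊ PD_0^t(R) = PD_0(R) of resolving subcategories of mod R, and these t+1 subcategories are precisely all the resolving subcategories of mod R contained in PD_0(R). Moreover, when t > 0, for each integer 1 ≤ n ≤ t one has PD_0^n(R) = res(Tr Ω^{n-1} k) = ext(R ⊕ ⊕_{i=0}^{n-1} Tr Ω^i k). -/

import Mathlib

universe u

open CategoryTheory

namespace ResolvPaper

variable (R : Type u) [CommRing R]

/-- `IsSES f g` means `0 → A → B → C → 0` is a short exact sequence. -/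
def IsSES {R : Type u} [CommRing R] {A B C : Type u} [AddCommGroup A] [Module R A]
    [AddCommGroup B] [Module R B] [AddCommGroup C] [Module R C]
    (f : A →ₗ[R] B) (g : B →ₗ[R] C) : Prop :=
  Function.Injective f ∧ Function.Surjective g ∧ LinearMap.range f = LinearMap.ker g

/-- A resolving subcategory of `mod R`, viewed as a set of bundled modules
closed under isomorphism, containing the finitely generated projective modules, and closed
under direct summands, extensions and syzygies. -/
structure IsResolving (𝒳 : Set (ModuleCat.{u} R)) : Prop where
  fg : ∀ M ∈ 𝒳, Module.Finite R M
  iso_closed : ∀ M N : ModuleCat.{u} R, Nonempty (M ≃ₗ[R] N) → M ∈ 𝒳 → N ∈ 𝒳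
  proj_mem : ∀ M : ModuleCat.{u} R, Module.Finite R M → Module.Projective R M → M ∈ 𝒳
  summand_closed : ∀ M N : ModuleCat.{u} R, ModuleCat.of R (↥M × ↥N) ∈ 𝒳 → M ∈ 𝒳
  ext_closed : ∀ (A B C : ModuleCat.{u} R) (f : A →ₗ[R] B) (g : B →ₗ[R] C),
    IsSES f g → A ∈ 𝒳 → C ∈ 𝒳 → B ∈ 𝒳
  syzygy_closed : ∀ (K P M : ModuleCat.{u} R) (f : K →ₗ[R] P) (g : P →ₗ[R] M),
    IsSES f g → Module.Finite R K → Module.Finite R P → Module.Projective R P →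
    M ∈ 𝒳 → K ∈ 𝒳

/-- The resolving closure: the smallest resolving subcategory containing `S`. -/
def resClosure (S : Set (ModuleCat.{u} R)) : Set (ModuleCat.{u} R) :=
  ⋂₀ {𝒳 | IsResolving R 𝒳 ∧ S ⊆ 𝒳}

/-- An extension-closed subcategory of `mod R`: closed under isomorphism,
direct summands and extensions. -/
def IsExtClosed (𝒳 : Set (ModuleCat.{u} R)) : Prop :=
  (∀ M N : ModuleCat.{u} R, Nonempty (M ≃ₗ[R] N) → M ∈ 𝒳 → N ∈ 𝒳) ∧
  (∀ M N : ModuleCat.{u} R, ModuleCat.of R (↥M × ↥N) ∈ 𝒳 → M ∈ 𝒳) ∧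
  (∀ (A B C : ModuleCat.{u} R) (f : A →ₗ[R] B) (g : B →ₗ[R] C),
    IsSES f g → A ∈ 𝒳 → C ∈ 𝒳 → B ∈ 𝒳)

/-- The extension closure of a set of modules. -/
def extClosure (S : Set (ModuleCat.{u} R)) : Set (ModuleCat.{u} R) :=
  ⋂₀ {𝒳 | IsExtClosed R 𝒳 ∧ S ⊆ 𝒳}

/-- `add R`: direct summands of finite free modules. -/
def addR : Set (ModuleCat.{u} R) :=
  {M | ∃ (n : ℕ) (N : ModuleCat.{u} R), Nonempty ((↥M × ↥N) ≃ₗ[R] (Fin n → R))}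

/-- `pdLE n M` : the projective dimension of `M` is at most `n`. -/
def pdLE : ℕ → ModuleCat.{u} R → Prop
  | 0, M => Module.Projective R M
  | n+1, M => ∃ (K P : ModuleCat.{u} R) (f : K →ₗ[R] P) (g : P →ₗ[R] M),
      Module.Finite R P ∧ Module.Projective R P ∧ IsSES f g ∧ pdLE n K

/-- The projective dimension, an element of `WithBot ℕ∞`; the zero module
has projective dimension `⊥ = -∞`. -/
noncomputable def pdim (M : ModuleCat.{u} R) : WithBot ℕ∞ :=
  sInf {x : WithBot ℕ∞ | (x = ⊥ ∧ Subsingleton M) ∨ ∃ n : ℕ, x = (n : ℕ∞) ∧ pdLE R n M}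

/-- The depth of `M` with respect to the ideal `I`: the supremum of lengths of weakly
`M`-regular sequences contained in `I`.  The zero module has depth `∞`. -/
noncomputable def depthE (I : Ideal R) (M : Type u) [AddCommGroup M] [Module R M] : ℕ∞ :=
  sSup {x : ℕ∞ | ∃ rs : List R, (∀ r ∈ rs, r ∈ I) ∧
    RingTheory.Sequence.IsWeaklyRegular M rs ∧ x = rs.length}

/-- The grade of an ideal: the length of a maximal `R`-regular sequence in `I`. -/
noncomputable def gradeE (I : Ideal R) : ℕ∞ := depthE R I R

/-- A grade consistent function on `Spec R`. -/
def GradeConsistent (f : PrimeSpectrum R → ℕ) : Prop :=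
  (∀ p : PrimeSpectrum R, (f p : ℕ∞) ≤ gradeE R p.asIdeal) ∧
  (∀ p q : PrimeSpectrum R, p.asIdeal ≤ q.asIdeal → f p ≤ f q)

/-- The localization of a module at a prime, as a module over the local ring `R_p`. -/
noncomputable abbrev localizeM (p : PrimeSpectrum R) (M : ModuleCat.{u} R) :
    ModuleCat.{u} (Localization.AtPrime p.asIdeal) :=
  ModuleCat.of (Localization.AtPrime p.asIdeal) (LocalizedModule p.asIdeal.primeCompl M)

/-- `pd_{R_p} M_p`. -/
noncomputable def localPdim (p : PrimeSpectrum R) (M : ModuleCat.{u} R) : WithBot ℕ∞ :=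
  pdim (Localization.AtPrime p.asIdeal) (localizeM R p M)

/-- `depth_{R_p} M_p`. -/
noncomputable def localDepth (p : PrimeSpectrum R) (M : ModuleCat.{u} R) : ℕ∞ :=
  depthE (Localization.AtPrime p.asIdeal)
    (IsLocalRing.maximalIdeal (Localization.AtPrime p.asIdeal))
    (LocalizedModule p.asIdeal.primeCompl M)

/-- The height of a prime ideal. -/
noncomputable def heightE (p : PrimeSpectrum R) : ℕ∞ := Order.height p

/-- `PD(R)` : finitely generated modules of finite projective dimension. -/
def PDcat : Set (ModuleCat.{u} R) :=
  {M | Module.Finite R M ∧ ∃ n : ℕ, pdLE R n M}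

/-- `MCM(R)` : maximal Cohen-Macaulay modules. -/
def MCMcat : Set (ModuleCat.{u} R) :=
  {M | Module.Finite R M ∧ ∀ p : PrimeSpectrum R, heightE R p ≤ localDepth R p M}

/-- The nonfree locus of a module. -/
def NF (M : ModuleCat.{u} R) : Set (PrimeSpectrum R) :=
  {p | ¬ Module.Free (Localization.AtPrime p.asIdeal) (LocalizedModule p.asIdeal.primeCompl M)}

/-- The infinite projective dimension locus of a module. -/
def IPD (M : ModuleCat.{u} R) : Set (PrimeSpectrum R) :=
  {p | localPdim R p M = (⊤ : WithBot ℕ∞)}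

/-- The infinite projective dimension locus of a collection of modules. -/
def IPDcat (𝒳 : Set (ModuleCat.{u} R)) : Set (PrimeSpectrum R) :=
  ⋃ M ∈ 𝒳, IPD R M

/-- The modules in `mod R` whose infinite projective dimension locus lies in `W`. -/
def IPDinv (W : Set (PrimeSpectrum R)) : Set (ModuleCat.{u} R) :=
  {M | Module.Finite R M ∧ IPD R M ⊆ W}

/-- A specialization closed subset of `Spec R`. -/
def SpecClosed (W : Set (PrimeSpectrum R)) : Prop :=
  ∀ p ∈ W, ∀ q : PrimeSpectrum R, p.asIdeal ≤ q.asIdeal → q ∈ W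

/-- Membership in `add 𝒳_p`: direct summands of localizations of finite direct sums
of members of `𝒳`. -/
def memAddLocal (𝒳 : Set (ModuleCat.{u} R)) (p : PrimeSpectrum R)
    (N : ModuleCat.{u} (Localization.AtPrime p.asIdeal)) : Prop :=
  ∃ (n : ℕ) (X : Fin n → ModuleCat.{u} R), (∀ i, X i ∈ 𝒳) ∧
    ∃ (N' : ModuleCat.{u} (Localization.AtPrime p.asIdeal)),
      Nonempty ((↥N × ↥N') ≃ₗ[Localization.AtPrime p.asIdeal]
        ((i : Fin n) → LocalizedModule p.asIdeal.primeCompl (X i)))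

/-- `K` is an `n`-th syzygy of `M` computed from a minimal free resolution over the
local ring `S`. -/
def IsMinSyz (S : Type u) [CommRing S] [IsLocalRing S] :
    ℕ → ModuleCat.{u} S → ModuleCat.{u} S → Prop
  | 0, M, K => Nonempty (K ≃ₗ[S] M)
  | n+1, M, K => ∃ (F : ModuleCat.{u} S) (g : F →ₗ[S] M) (K' : ModuleCat.{u} S)
      (i : K' →ₗ[S] F),
      Module.Finite S F ∧ Module.Free S F ∧ Function.Surjective g ∧
      (LinearMap.ker g ≤ (IsLocalRing.maximalIdeal S) • (⊤ : Submodule S F)) ∧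
      Function.Injective i ∧ LinearMap.range i = LinearMap.ker g ∧
      IsMinSyz S n K' K

/-- `K` is an `n`-th syzygy of `M` in some projective resolution (over any ring). -/
def IsSyz : ℕ → ModuleCat.{u} R → ModuleCat.{u} R → Prop
  | 0, M, K => Nonempty (K ≃ₗ[R] M)
  | n+1, M, K => ∃ (F : ModuleCat.{u} R) (g : F →ₗ[R] M) (K' : ModuleCat.{u} R)
      (i : K' →ₗ[R] F),
      Module.Finite R F ∧ Module.Projective R F ∧ Function.Surjective g ∧
      Function.Injective i ∧ LinearMap.range i = LinearMap.ker g ∧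
      IsSyz n K' K

/-- `T` is (isomorphic to) the Auslander transpose of `M`, computed from a minimal
free presentation over the local ring `S`. -/
def IsTranspose (S : Type u) [CommRing S] [IsLocalRing S] (M T : ModuleCat.{u} S) : Prop :=
  ∃ (F1 F0 : ModuleCat.{u} S) (d : F1 →ₗ[S] F0) (e : F0 →ₗ[S] M),
    Module.Finite S F0 ∧ Module.Free S F0 ∧ Module.Finite S F1 ∧ Module.Free S F1 ∧
    Function.Surjective e ∧ LinearMap.range d = LinearMap.ker e ∧
    LinearMap.ker e ≤ (IsLocalRing.maximalIdeal S) • (⊤ : Submodule S F0) ∧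
    LinearMap.ker d ≤ (IsLocalRing.maximalIdeal S) • (⊤ : Submodule S F1) ∧
    Nonempty (T ≃ₗ[S] ((Module.Dual S F1) ⧸ LinearMap.range d.dualMap))

/-- `T` is (isomorphic to) `Tr Ω^n M` over the local ring `S`. -/
def IsTrOmega (S : Type u) [CommRing S] [IsLocalRing S] (n : ℕ) (M T : ModuleCat.{u} S) :
    Prop :=
  ∃ K : ModuleCat.{u} S, IsMinSyz S n M K ∧ IsTranspose S K T

/-- Resolving subcategory `𝒳` is dominant on `W ⊆ Spec R`. -/
def DominantOn (𝒳 : Set (ModuleCat.{u} R)) (W : Set (PrimeSpectrum R)) : Prop :=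
  ∀ p ∈ W, ∃ (n : ℕ) (K : ModuleCat.{u} (Localization.AtPrime p.asIdeal)),
    IsMinSyz (Localization.AtPrime p.asIdeal) n
      (ModuleCat.of (Localization.AtPrime p.asIdeal)
        (IsLocalRing.ResidueField (Localization.AtPrime p.asIdeal))) K ∧
    memAddLocal R 𝒳 p K

/-- Dominant resolving subcategory. -/
def Dominant (𝒳 : Set (ModuleCat.{u} R)) : Prop := DominantOn R 𝒳 Set.univ

/-- A (noetherian) local ring is Cohen-Macaulay if its depth equals its Krull dimension. -/
def IsCMLocalRing (S : Type u) [CommRing S] [IsLocalRing S] : Prop :=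
  IsNoetherianRing S ∧
    ((depthE S (IsLocalRing.maximalIdeal S) S : WithBot ℕ∞) = ringKrullDim S)

/-- A regular local ring: a noetherian local ring whose maximal ideal is generated by
`dim S` elements. -/
def IsRegLocalRing (S : Type u) [CommRing S] [IsLocalRing S] : Prop :=
  IsNoetherianRing S ∧ ∃ s : Finset S,
    Ideal.span (s : Set S) = IsLocalRing.maximalIdeal S ∧
    ringKrullDim S = (s.card : WithBot ℕ∞)

/-- The singular locus of `R`. -/
def SingLocus : Set (PrimeSpectrum R) :=
  {p | ¬ IsRegLocalRing (Localization.AtPrime p.asIdeal)}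

/-- A hypersurface local ring: the completion is a quotient of a regular local ring by
one element. -/
def IsHypersurfaceLocalRing (S : Type u) [CommRing S] [IsLocalRing S] : Prop :=
  ∃ (T : Type u) (_ : CommRing T) (_ : IsLocalRing T) (f : T),
    IsRegLocalRing T ∧
    Nonempty ((AdicCompletion (IsLocalRing.maximalIdeal S) S) ≃+* (T ⧸ Ideal.span {f}))

/-- A complete intersection local ring: the completion is a quotient of a regular local
ring by a regular sequence. -/
def IsCompleteIntersectionLocalRing (S : Type u) [CommRing S] [IsLocalRing S] : Prop :=
  ∃ (T : Type u) (_ : CommRing T) (_ : IsLocalRing T) (rs : List T),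
    IsRegLocalRing T ∧ RingTheory.Sequence.IsRegular T rs ∧
    Nonempty ((AdicCompletion (IsLocalRing.maximalIdeal S) S) ≃+*
      (T ⧸ Ideal.ofList rs))

/-- The subquotient `A / (A ⊓ B)` of two submodules, used for homology. -/
def subquot {S M : Type u} [CommRing S] [AddCommGroup M] [Module S M]
    (A B : Submodule S M) : Type u :=
  A ⧸ (B.comap A.subtype)

noncomputable instance {S M : Type u} [CommRing S] [AddCommGroup M] [Module S M]
    (A B : Submodule S M) : AddCommGroup (subquot A B) :=
  inferInstanceAs (AddCommGroup (A ⧸ (B.comap A.subtype)))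

noncomputable instance {S M : Type u} [CommRing S] [AddCommGroup M] [Module S M]
    (A B : Submodule S M) : Module S (subquot A B) :=
  inferInstanceAs (Module S (A ⧸ (B.comap A.subtype)))

/-- `E` is (isomorphic to) `Ext^{j+1}_S(M, S)`, computed from a finite free resolution. -/
def IsExtPos (S : Type u) [CommRing S] (j : ℕ) (M E : ModuleCat.{u} S) : Prop :=
  ∃ (F : ℕ → ModuleCat.{u} S) (d : ∀ i : ℕ, (F (i+1) : Type u) →ₗ[S] F i)
    (e : (F 0 : Type u) →ₗ[S] M),
    (∀ i, Module.Finite S (F i)) ∧ (∀ i, Module.Free S (F i)) ∧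
    Function.Surjective e ∧ LinearMap.range (d 0) = LinearMap.ker e ∧
    (∀ i, LinearMap.range (d (i+1)) = LinearMap.ker (d i)) ∧
    Nonempty (E ≃ₗ[S]
      subquot (LinearMap.ker ((d (j+1)).dualMap)) (LinearMap.range ((d j).dualMap)))

/-- `T` is (isomorphic to) `Tor_n^S(M, N)`, computed from a projective resolution of `M`. -/
def IsTor (S : Type u) [CommRing S] (n : ℕ) (M N T : ModuleCat.{u} S) : Prop :=
  ∃ (F : ℕ → ModuleCat.{u} S) (d : ∀ i : ℕ, (F (i+1) : Type u) →ₗ[S] F i)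
    (e : (F 0 : Type u) →ₗ[S] M),
    (∀ i, Module.Projective S (F i)) ∧
    Function.Surjective e ∧ LinearMap.range (d 0) = LinearMap.ker e ∧
    (∀ i, LinearMap.range (d (i+1)) = LinearMap.ker (d i)) ∧
    (match n with
      | 0 => Nonempty (T ≃ₗ[S] TensorProduct S M N)
      | (j+1) => Nonempty (T ≃ₗ[S]
          subquot (LinearMap.ker (LinearMap.rTensor (↥N) (d j)))
            (LinearMap.range (LinearMap.rTensor (↥N) (d (j+1))))))

/-- `idLE n M` : the injective dimension of `M` is at most `n`. -/
def idLE (S : Type u) [CommRing S] : ℕ → ModuleCat.{u} S → Prop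
  | 0, M => Module.Injective S M
  | n+1, M => ∃ (I C : ModuleCat.{u} S) (f : M →ₗ[S] I) (g : I →ₗ[S] C),
      IsSES f g ∧ Module.Injective S I ∧ idLE S n C

/-- `PD_0^n(R)` over a local ring: modules of projective dimension at most `n` that are
free on the punctured spectrum. -/
def PD0n [IsLocalRing R] (n : ℕ) : Set (ModuleCat.{u} R) :=
  {M | Module.Finite R M ∧ pdLE R n M ∧
    ∀ p : PrimeSpectrum R, p.asIdeal ≠ IsLocalRing.maximalIdeal R →
      Module.Free (Localization.AtPrime p.asIdeal) (LocalizedModule p.asIdeal.primeCompl M)}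

/-- `PD_0(R)` over a local ring: modules of finite projective dimension that are
free on the punctured spectrum. -/
def PD0 [IsLocalRing R] : Set (ModuleCat.{u} R) :=
  {M | Module.Finite R M ∧ (∃ n : ℕ, pdLE R n M) ∧
    ∀ p : PrimeSpectrum R, p.asIdeal ≠ IsLocalRing.maximalIdeal R →
      Module.Free (Localization.AtPrime p.asIdeal) (LocalizedModule p.asIdeal.primeCompl M)}

/-- The residue field of a local ring, as a bundled module. -/
noncomputable abbrev residueMod (S : Type u) [CommRing S] [IsLocalRing S] : ModuleCat.{u} S :=
  ModuleCat.of S (IsLocalRing.ResidueField S)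


end ResolvPaper

namespace ResolvPaper
section Helpers1
set_option linter.unusedSectionVars false
open Abelian
variable {R : Type u} [CommRing R]

theorem IsSES.se {A B C : ModuleCat.{u} R} {f : A →ₗ[R] B} {g : B →ₗ[R] C} (h : IsSES f g) :
    (ShortComplex.mk (ModuleCat.ofHom f) (ModuleCat.ofHom g) (by
      ext x
      have : f x ∈ LinearMap.ker g := h.2.2 ▸ LinearMap.mem_range_self f x
      simpa using this)).ShortExact := by
  have e := h.2.2
  refine ShortComplex.ShortExact.mk' ?_ ?_ ?_
  · rw [ShortComplex.moduleCat_exact_iff_range_eq_ker]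
    exact e
  · rw [ModuleCat.mono_iff_injective]
    exact h.1
  · rw [ModuleCat.epi_iff_surjective]
    exact h.2.1

/-- precomposition on `Ext` -/
noncomputable def pre {A B Y : ModuleCat.{u} R} {i : ℕ} (f : A →ₗ[R] B) (x : Ext B Y i) : Ext A Y i :=
  (Ext.mk₀ (ModuleCat.ofHom f)).comp x (zero_add i)

/-- connecting map on `Ext` -/
noncomputable def dlt {A B C Y : ModuleCat.{u} R} {f : A →ₗ[R] B} {g : B →ₗ[R] C} (h : IsSES f g)
    {i : ℕ} (x : Ext A Y i) : Ext C Y (i+1) :=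
  h.se.extClass.comp x (add_comm 1 i)

section
variable {A B C D Y : ModuleCat.{u} R} {i : ℕ}

theorem pre_pre (f : A →ₗ[R] B) (g : B →ₗ[R] C) (x : Ext C Y i) :
    pre f (pre g x) = pre (g ∘ₗ f) x := by
  simp [pre, ModuleCat.ofHom_comp]

theorem pre_id (x : Ext A Y i) : pre (LinearMap.id) x = x := by
  simp only [pre]
  exact Ext.mk₀_id_comp x

theorem pre_add (f : A →ₗ[R] B) (x y : Ext B Y i) : pre f (x + y) = pre f x + pre f y := by
  simp [pre]

theorem pre_smul (f : A →ₗ[R] B) (r : R) (x : Ext B Y i) : pre f (r • x) = r • pre f x := by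
  simp [pre]

theorem pre_zero (f : A →ₗ[R] B) : pre f (0 : Ext B Y i) = 0 := by
  simp [pre]

theorem add_pre (f g : A →ₗ[R] B) (x : Ext B Y i) : pre (f + g) x = pre f x + pre g x := by
  simp [pre, ModuleCat.ofHom_add, Ext.mk₀_add]

theorem smul_pre (f : A →ₗ[R] B) (r : R) (x : Ext B Y i) : pre (r • f) x = r • pre f x := by
  have : ModuleCat.ofHom (r • f) = r • ModuleCat.ofHom f := rfl
  simp [pre, this, Ext.mk₀_smul]

theorem zero_pre (x : Ext B Y i) : pre (0 : A →ₗ[R] B) x = 0 := by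
  have : ModuleCat.ofHom (0 : A →ₗ[R] B) = 0 := rfl
  simp [pre, this]

/-- `pre` as a linear map -/
noncomputable def preL (f : A →ₗ[R] B) : Ext B Y i →ₗ[R] Ext A Y i where
  toFun := pre f
  map_add' := pre_add f
  map_smul' := pre_smul f

theorem smul_eq_pre (r : R) (x : Ext A Y i) : r • x = pre (r • LinearMap.id) x := by
  rw [smul_pre, pre_id]

theorem ext_proj [Module.Projective R A] (x : Ext A Y (i+1)) : x = 0 := by
  have : Projective A := (IsProjective.iff_projective A).mp ‹_›
  exact x.eq_zero_of_projective

theorem ext_split (x : Ext (ModuleCat.of R (A × B)) Y i) :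
    x = pre (A := ModuleCat.of R (A × B)) (LinearMap.fst R A B)
          (pre (B := ModuleCat.of R (A × B)) (LinearMap.inl R A B) x)
      + pre (A := ModuleCat.of R (A × B)) (LinearMap.snd R A B)
          (pre (B := ModuleCat.of R (A × B)) (LinearMap.inr R A B) x) := by
  rw [pre_pre, pre_pre, ← add_pre]
  conv_lhs => rw [← pre_id x]
  congr 1
  ext x <;> simp

variable {f : A →ₗ[R] B} {g : B →ₗ[R] C} (h : IsSES f g)

theorem ex1 (x : Ext A Y i) (hx : dlt h x = 0) : ∃ z : Ext B Y i, pre f z = x :=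
  Ext.contravariant_sequence_exact₁ h.se Y x (add_comm 1 i) hx

theorem ex2 (h : IsSES f g) (z : Ext B Y i) (hz : pre f z = 0) : ∃ w : Ext C Y i, pre g w = z :=
  Ext.contravariant_sequence_exact₂ h.se Y z hz

theorem ex3 (w : Ext C Y (i+1)) (hw : pre g w = 0) : ∃ x : Ext A Y i, dlt h x = w :=
  Ext.contravariant_sequence_exact₃ h.se Y w hw (add_comm 1 i)

theorem dlt_pre (z : Ext B Y i) : dlt h (pre f z) = 0 :=
  h.se.extClass_comp_assoc z (h := add_comm 1 i)

theorem pre_dlt (x : Ext A Y i) : pre g (dlt h x) = 0 :=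
  h.se.comp_extClass_assoc x (add_comm 1 i)

theorem pre_pre_zero (h : IsSES f g) (x : Ext C Y i) : pre f (pre g x) = 0 := by
  rw [pre_pre]
  have : g ∘ₗ f = 0 := by
    ext x
    have : f x ∈ LinearMap.ker g := h.2.2 ▸ LinearMap.mem_range_self f x
    simpa using this
  rw [this, zero_pre]

theorem dlt_smul (r : R) (x : Ext A Y i) : dlt h (r • x) = r • dlt h x := by
  simp [dlt]

theorem dlt_zero : dlt h (0 : Ext A Y i) = 0 := by
  simp [dlt]

theorem dlt_nat {A' B' C' : ModuleCat.{u} R} {f' : A' →ₗ[R] B'} {g' : B' →ₗ[R] C'} (h' : IsSES f' g')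
    (a : A →ₗ[R] A') (b : B →ₗ[R] B') (c : C →ₗ[R] C') (h1 : f' ∘ₗ a = b ∘ₗ f) (h2 : g' ∘ₗ b = c ∘ₗ g)
    (x : Ext A' Y i) : pre c (dlt h' x) = dlt h (pre a x) := by
  have key := ShortComplex.ShortExact.extClass_naturality h.se h'.se
    { τ₁ := ModuleCat.ofHom a
      τ₂ := ModuleCat.ofHom b
      τ₃ := ModuleCat.ofHom c
      comm₁₂ := by
        ext x
        exact LinearMap.congr_fun h1 x
      comm₂₃ := by
        ext x
        exact LinearMap.congr_fun h2 x }
  simp only [pre, dlt]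
  rw [← Ext.comp_assoc_of_second_deg_zero, ← Ext.comp_assoc (α := Ext.mk₀ (ModuleCat.ofHom c)) (a₂₃ := i + 1) (a₁₂ := 1) (h := by omega)]
  · erw [key]

end
end Helpers1
end ResolvPaper

namespace ResolvPaper
section Helpers2
set_option linter.unusedSectionVars false
open Abelian
variable {R : Type u} [CommRing R]

/-- postcomposition on `Ext` -/
noncomputable def post {N Y Z : ModuleCat.{u} R} {i : ℕ} (f : Y →ₗ[R] Z) (x : Ext N Y i) : Ext N Z i :=
  x.comp (Ext.mk₀ (ModuleCat.ofHom f)) (add_zero i)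

/-- covariant connecting map on `Ext` -/
noncomputable def cdl {A B C N : ModuleCat.{u} R} {f : A →ₗ[R] B} {g : B →ₗ[R] C} (h : IsSES f g)
    {i : ℕ} (x : Ext N C i) : Ext N A (i+1) :=
  x.comp h.se.extClass rfl

section
variable {A B C D N N' Y Z W : ModuleCat.{u} R} {i : ℕ}

theorem post_post (f : Y →ₗ[R] Z) (g : Z →ₗ[R] W) (x : Ext N Y i) :
    post g (post f x) = post (g ∘ₗ f) x := by
  simp [post, ModuleCat.ofHom_comp]

theorem post_id (x : Ext A Y i) : post (LinearMap.id) x = x := by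
  simp only [post]
  exact Ext.comp_mk₀_id x

theorem post_add (f : Y →ₗ[R] Z) (x y : Ext N Y i) : post f (x + y) = post f x + post f y := by
  simp [post]

theorem post_smul (f : Y →ₗ[R] Z) (r : R) (x : Ext N Y i) : post f (r • x) = r • post f x := by
  simp [post]

theorem post_zero (f : Y →ₗ[R] Z) : post f (0 : Ext N Y i) = 0 := by
  simp [post]

theorem add_post (f g : Y →ₗ[R] Z) (x : Ext N Y i) : post (f + g) x = post f x + post g x := by
  simp [post, ModuleCat.ofHom_add, Ext.mk₀_add]

theorem smul_post (f : Y →ₗ[R] Z) (r : R) (x : Ext N Y i) : post (r • f) x = r • post f x := by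
  have : ModuleCat.ofHom (r • f) = r • ModuleCat.ofHom f := rfl
  simp [post, this, Ext.mk₀_smul]

theorem zero_post (x : Ext N Y i) : post (0 : Y →ₗ[R] Z) x = 0 := by
  have : ModuleCat.ofHom (0 : Y →ₗ[R] Z) = 0 := rfl
  simp [post, this]

theorem pre_post (f : N' →ₗ[R] N) (g : Y →ₗ[R] Z) (x : Ext N Y i) :
    pre f (post g x) = post g (pre f x) := by
  simp only [pre, post]
  rw [Ext.comp_assoc (a₁₂ := i) (a₂₃ := i) (h := by omega)]

/-- `post` as a linear map -/
noncomputable def postL (f : Y →ₗ[R] Z) : Ext N Y i →ₗ[R] Ext N Z i where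
  toFun := post f
  map_add' := post_add f
  map_smul' := post_smul f

theorem smul_eq_post (r : R) (x : Ext N Y i) : r • x = post (r • LinearMap.id) x := by
  rw [smul_post, post_id]

theorem post_sum {ι : Type*} (s : Finset ι) (φ : ι → (Y →ₗ[R] Z)) (x : Ext N Y i) :
    post (∑ j ∈ s, φ j) x = ∑ j ∈ s, post (φ j) x := by
  classical
  induction s using Finset.induction_on with
  | empty => simp [zero_post]
  | insert a s ha ih => rw [Finset.sum_insert ha, Finset.sum_insert ha, add_post, ih]

/-- the class in `Ext^0` of a linear map -/
noncomputable def hm (f : N →ₗ[R] Y) : Ext N Y 0 := Ext.mk₀ (ModuleCat.ofHom f)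

theorem hm_surj (x : Ext N Y 0) : ∃ f : N →ₗ[R] Y, hm f = x := by
  obtain ⟨f, hf⟩ := (Ext.mk₀_bijective N Y).2 x
  exact ⟨f.hom, hf⟩

theorem hm_inj {f g : N →ₗ[R] Y} (h : hm f = hm g) : f = g := by
  have := (Ext.mk₀_bijective N Y).1 h
  exact congrArg ModuleCat.Hom.hom this

theorem hm_zero : hm (0 : N →ₗ[R] Y) = 0 := by
  have : ModuleCat.ofHom (0 : N →ₗ[R] Y) = 0 := rfl
  simp [hm, this]

theorem pre_hm (f : A →ₗ[R] N) (g : N →ₗ[R] Y) : pre f (hm g) = hm (g ∘ₗ f) := by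
  simp [pre, hm, ModuleCat.ofHom_comp]

theorem post_hm (f : N →ₗ[R] Y) (g : Y →ₗ[R] Z) : post g (hm f) = hm (g ∘ₗ f) := by
  simp [post, hm, ModuleCat.ofHom_comp]

theorem smul_hm (r : R) (f : N →ₗ[R] Y) : r • (hm f) = hm (r • f) := by
  have : ModuleCat.ofHom (r • f) = r • ModuleCat.ofHom f := rfl
  simp [hm, this, Ext.mk₀_smul]

theorem comp_hm (x : Ext N Y i) (f : Y →ₗ[R] Z) : x.comp (hm f) (add_zero i) = post f x := rfl
theorem hm_comp (x : Ext N Y i) (f : A →ₗ[R] N) : (hm f).comp x (zero_add i) = pre f x := rfl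

variable {f : A →ₗ[R] B} {g : B →ₗ[R] C} (h : IsSES f g)

theorem dlt_post (φ : Y →ₗ[R] Z) (x : Ext A Y i) : dlt h (post φ x) = post φ (dlt h x) := by
  simp only [dlt, post]
  rw [Ext.comp_assoc (a₁₂ := i+1) (a₂₃ := i) (h := by omega)]

theorem cdl_pre (φ : N' →ₗ[R] N) (x : Ext N C i) : cdl h (pre φ x) = pre φ (cdl h x) := by
  simp only [cdl, pre]
  rw [Ext.comp_assoc (a₁₂ := i) (a₂₃ := i+1) (h := by omega)]

theorem cex1 (x : Ext N A (i+1)) (hx : post f x = 0) : ∃ z : Ext N C i, cdl h z = x :=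
  Ext.covariant_sequence_exact₁ N h.se x hx rfl

theorem cex2 (h : IsSES f g) (x : Ext N B i) (hx : post g x = 0) : ∃ z : Ext N A i, post f z = x :=
  Ext.covariant_sequence_exact₂ N h.se x hx

theorem cex3 (x : Ext N C i) (hx : cdl h x = 0) : ∃ z : Ext N B i, post g z = x :=
  Ext.covariant_sequence_exact₃ N h.se x rfl hx

theorem post_cdl (x : Ext N C i) : post f (cdl h x) = 0 := by
  simp only [cdl, post]
  rw [Ext.comp_assoc (a₁₂ := i+1) (a₂₃ := 1) (h := by omega)]
  · have := h.se.extClass_comp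
    erw [this]
    exact Ext.comp_zero ..
  · rfl

theorem IsSES.comp_zero (h : IsSES f g) : g ∘ₗ f = 0 := by
  ext x
  have : f x ∈ LinearMap.ker g := h.2.2 ▸ LinearMap.mem_range_self f x
  simpa using this

theorem IsSES.apply_zero (h : IsSES f g) (x : A) : g (f x) = 0 := by
  have : f x ∈ LinearMap.ker g := h.2.2 ▸ LinearMap.mem_range_self f x
  simpa using this

theorem IsSES.exists_of (h : IsSES f g) (x : B) (hx : g x = 0) : ∃ a, f a = x := by
  have : x ∈ LinearMap.range f := h.2.2 ▸ (by simpa using hx)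
  exact this

theorem post_post_zero (h : IsSES f g) (x : Ext N A i) : post g (post f x) = 0 := by
  rw [post_post, h.comp_zero, zero_post]

/-- `Ext^i(N, F)` for `F` free, tested by functionals -/
theorem ext_free_test [Module.Finite R Y] [Module.Free R Y] (x : Ext N Y i)
    (hx : ∀ ψ : Y →ₗ[R] R, post (Z := ModuleCat.of R R) ψ x = 0) : x = 0 := by
  classical
  let b := Module.Free.chooseBasis R Y
  rw [← post_id x]
  have : (LinearMap.id : Y →ₗ[R] Y) = ∑ j, (LinearMap.toSpanSingleton R Y (b j)) ∘ₗ (b.coord j) := by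
    ext y
    simp [b.sum_repr]
  rw [this, post_sum]
  apply Finset.sum_eq_zero
  intro j _
  have := post_post (W := Y) (Z := ModuleCat.of R R) (b.coord j) (LinearMap.toSpanSingleton R Y (b j)) x
  rw [← this, hx, post_zero]

theorem ext_free_zero [Module.Finite R Y] [Module.Free R Y]
    (hN : ∀ x : Ext N (ModuleCat.of R R) i, x = 0) (x : Ext N Y i) : x = 0 :=
  ext_free_test x fun _ => hN _

/-- vanishing of `Ext` from degree `n` on -/
def PdLT (n : ℕ) (M : ModuleCat.{u} R) : Prop := ∀ i, n ≤ i → ∀ (Y : ModuleCat.{u} R) (x : Ext M Y i), x = 0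

theorem PdLT.mono {n m : ℕ} (hnm : n ≤ m) (hN : PdLT n N) : PdLT m N :=
  fun i hi => hN i (hnm.trans hi)

theorem PdLT.retract {n : ℕ} (hN : PdLT n N) (a : N' →ₗ[R] N) (b : N →ₗ[R] N') (hab : b ∘ₗ a = LinearMap.id) :
    PdLT n N' := by
  intro i hi Y x
  rw [← pre_id x, ← hab, ← pre_pre, hN i hi _ (pre b x), pre_zero]

theorem PdLT.iso {n : ℕ} (hN : PdLT n N) (e : N ≃ₗ[R] N') : PdLT n N' :=
  hN.retract e.symm.toLinearMap e.toLinearMap (by ext; simp)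

theorem PdLT.of_proj [Module.Projective R N] : PdLT 1 N := by
  intro i hi Y x
  obtain ⟨j, rfl⟩ := Nat.exists_eq_add_of_le' hi
  exact ext_proj x

theorem PdLT.mid (h : IsSES f g) {n : ℕ} (hA : PdLT n A) (hC : PdLT n C) : PdLT n B := by
  intro i hi Y x
  obtain ⟨w, rfl⟩ := ex2 h x (hA i hi _ _)
  rw [hC i hi _ w, pre_zero]

theorem PdLT.right (h : IsSES f g) {n : ℕ} (hA : PdLT n A) (hB : PdLT (n+1) B) : PdLT (n+1) C := by
  intro i hi Y x
  obtain ⟨j, rfl⟩ := Nat.exists_eq_add_of_le' (show 1 ≤ i by omega)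
  obtain ⟨w, rfl⟩ := ex3 h x (hB _ hi _ _)
  rw [hA _ (by omega) _ w, dlt_zero]

theorem PdLT.left (h : IsSES f g) {n : ℕ} (hB : PdLT n B) (hC : PdLT (n+1) C) : PdLT n A := by
  intro i hi Y x
  obtain ⟨w, rfl⟩ := ex1 h x (hC _ (by omega) _ _)
  rw [hB i hi _ w, pre_zero]

theorem retract_of_split (h : IsSES f g) (hz : dlt h (hm (LinearMap.id : A →ₗ[R] A)) = 0) :
    ∃ s : C →ₗ[R] B, g ∘ₗ s = LinearMap.id := by
  obtain ⟨z, hz⟩ := ex1 h _ hz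
  obtain ⟨r, rfl⟩ := hm_surj z
  rw [pre_hm] at hz
  have hr := hm_inj hz
  have hr' : ∀ x, r (f x) = x := fun x => LinearMap.congr_fun hr x
  have hex : Function.Exact f g := by
    intro y
    constructor
    · intro hy
      exact h.exists_of y hy
    · rintro ⟨a, rfl⟩
      exact h.apply_zero a
  have := (hex.split_tfae' ).out 1 0
  exact (this.mp ⟨h.2.1, r, hr⟩).2

theorem proj_of_retract {P : ModuleCat.{u} R} [Module.Projective R P] (s : N →ₗ[R] P) (g : P →ₗ[R] N)
    (hs : g ∘ₗ s = LinearMap.id) : Module.Projective R N :=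
  Module.Projective.of_split s g hs

theorem PdLT.proj {n : ℕ} (hn : n ≤ 1) (hN : PdLT n N) : Module.Projective R N := by
  have : HasProjectiveDimensionLT N 1 :=
    HasProjectiveDimensionLT.mk fun i hi Y x => hN i (by omega) Y x
  exact (IsProjective.iff_projective N).mpr (projective_iff_hasProjectiveDimensionLT_one.mpr this)

variable [IsNoetherianRing R]

theorem exists_cover (M : ModuleCat.{u} R) [Module.Finite R M] :
    ∃ (F K : ModuleCat.{u} R) (f : K →ₗ[R] F) (g : F →ₗ[R] M), Module.Finite R F ∧ Module.Free R F ∧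
      Module.Finite R K ∧ IsSES f g := by
  obtain ⟨n, g, hg⟩ := Module.Finite.exists_fin' R M
  refine ⟨ModuleCat.of R (Fin n → R), ModuleCat.of R (LinearMap.ker g), (LinearMap.ker g).subtype, g, ?_, ?_, ?_, ?_⟩
  · change Module.Finite R (Fin n → R); infer_instance
  · change Module.Free R (Fin n → R); infer_instance
  · change Module.Finite R (LinearMap.ker g); infer_instance
  · exact ⟨Subtype.val_injective, hg, by simp⟩

theorem PdLT.of_finite {M : ModuleCat.{u} R} [Module.Finite R M] {n : ℕ}
    (hM : ∀ L : ModuleCat.{u} R, Module.Finite R L → ∀ x : Ext M L n, x = 0) : PdLT n M := by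
  have := ModuleCat.hasProjectiveDimensionLT_of_forall_finite M n
    (fun L hL => ⟨fun x y => by rw [hM L hL x, hM L hL y]⟩)
  intro i hi Y x
  exact x.eq_zero_of_hasProjectiveDimensionLT n hi

theorem PdLT.drop {M : ModuleCat.{u} R} [Module.Finite R M] {n : ℕ} (hM : PdLT (n+1) M)
    (h0 : ∀ x : Ext M (ModuleCat.of R R) n, x = 0) : PdLT n M := by
  apply PdLT.of_finite
  intro L _ x
  obtain ⟨F, K, f, g, _, _, _, h⟩ := exists_cover L
  obtain ⟨z, rfl⟩ := cex3 h x (hM _ le_rfl _ _)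
  rw [ext_free_zero h0 z, post_zero]

theorem pdLE_iff {M : ModuleCat.{u} R} [Module.Finite R M] (n : ℕ) : pdLE R n M ↔ PdLT (n+1) M := by
  induction n generalizing M with
  | zero =>
    constructor
    · intro hM
      have : Module.Projective R M := hM
      exact PdLT.of_proj
    · intro hM
      exact hM.proj le_rfl
  | succ n ih =>
    constructor
    · rintro ⟨K, P, f, g, _, _, h, hK⟩
      have : Module.Finite R K := Module.Finite.of_injective f h.1
      exact PdLT.right h (ih.mp hK) (PdLT.of_proj.mono (by omega))
    · intro hM
      obtain ⟨F, K, f, g, _, _, _, h⟩ := exists_cover M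
      exact ⟨K, F, f, g, inferInstance, inferInstance, h, ih.mpr (PdLT.left h (PdLT.of_proj.mono (by omega)) hM)⟩

end
end Helpers2
end ResolvPaper

namespace ResolvPaper
section Helpers3
set_option linter.unusedSectionVars false
open Abelian
variable {R : Type u} [CommRing R]

/-- `s` annihilates all higher Ext modules out of `M` -/
def kills (s : R) (M : ModuleCat.{u} R) : Prop :=
  ∀ (i : ℕ) (Y : ModuleCat.{u} R) (x : Ext M Y (i+1)), s • x = 0

section
variable {A B C M N F : ModuleCat.{u} R} {s r : R}

theorem kills.of_factor [Module.Projective R F] (a : M →ₗ[R] F) (b : F →ₗ[R] M) (hab : b ∘ₗ a = s • LinearMap.id) :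
    kills s M := by
  intro i Y x
  rw [smul_eq_pre, ← hab, ← pre_pre, ext_proj (pre b x), pre_zero]

theorem kills.factor {K : ModuleCat.{u} R} {f : K →ₗ[R] F} {g : F →ₗ[R] M} (h : IsSES f g) (hs : kills s M) :
    ∃ a : M →ₗ[R] F, g ∘ₗ a = s • LinearMap.id := by
  have h0 : cdl h (hm (s • LinearMap.id : M →ₗ[R] M)) = 0 := by
    rw [← smul_hm]
    have : cdl h (s • hm (LinearMap.id : M →ₗ[R] M)) = s • cdl h (hm (LinearMap.id : M →ₗ[R] M)) := by
      simp [cdl]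
    rw [this, hs]
  obtain ⟨z, hz⟩ := cex3 h _ h0
  obtain ⟨a, rfl⟩ := hm_surj z
  rw [post_hm] at hz
  exact ⟨a, hm_inj hz⟩

theorem kills.retract (hs : kills s M) (a : N →ₗ[R] M) (b : M →ₗ[R] N) (hab : b ∘ₗ a = LinearMap.id) : kills s N := by
  intro i Y x
  rw [← pre_id x, ← hab, ← pre_pre, ← pre_smul, hs, pre_zero]

theorem kills.mid {f : A →ₗ[R] B} {g : B →ₗ[R] C} (h : IsSES f g) (hA : kills s A) (hC : kills r C) : kills (r * s) B := by
  intro i Y x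
  have : pre f (s • x) = 0 := by rw [pre_smul, hA]
  obtain ⟨w, hw⟩ := ex2 h _ this
  rw [mul_smul, ← hw, ← pre_smul, hC, pre_zero]

theorem kills.left {f : A →ₗ[R] B} {g : B →ₗ[R] C} (h : IsSES f g) (hB : kills s B) (hC : kills r C) : kills (s * r) A := by
  intro i Y x
  have : dlt h (r • x) = 0 := by rw [dlt_smul, hC]
  obtain ⟨w, hw⟩ := ex1 h _ this
  rw [mul_smul, ← hw, ← pre_smul, hB, pre_zero]

theorem locfree_factor [IsNoetherianRing R] [Module.Finite R M] (p : Ideal R) [p.IsPrime]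
    (hfree : Module.Free (Localization.AtPrime p) (LocalizedModule p.primeCompl M)) :
    ∃ s ∉ p, kills s M := by
  obtain ⟨F, K, f, g, _, _, _, h⟩ := exists_cover M
  have hs : Function.Surjective (LocalizedModule.map p.primeCompl g) :=
    LocalizedModule.map_surjective _ g h.2.1
  have hproj : Module.Projective (Localization p.primeCompl) (LocalizedModule p.primeCompl M) :=
    @Module.Projective.of_free _ _ _ _ _ hfree
  obtain ⟨σ, hσ⟩ := Module.projective_lifting_property (LocalizedModule.map p.primeCompl g) LinearMap.id hs
  have hpres : Module.FinitePresentation R M := Module.finitePresentation_of_finite R M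
  obtain ⟨a, u, ha⟩ := Module.FinitePresentation.exists_lift_of_isLocalizedModule p.primeCompl
    (LocalizedModule.mkLinearMap p.primeCompl F)
    ((σ.restrictScalars R) ∘ₗ LocalizedModule.mkLinearMap p.primeCompl M)
  have hb : LocalizedModule.mkLinearMap p.primeCompl M ∘ₗ (g ∘ₗ a) =
      LocalizedModule.mkLinearMap p.primeCompl M ∘ₗ (u • LinearMap.id) := by
    ext x
    have h1 := LinearMap.congr_fun ha x
    have h2 : (LocalizedModule.map p.primeCompl g) (LocalizedModule.mkLinearMap p.primeCompl F (a x)) =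
      LocalizedModule.mkLinearMap p.primeCompl M (g (a x)) := by
      simp [LocalizedModule.mkLinearMap_apply]
    have h3 := LinearMap.congr_fun hσ (LocalizedModule.mkLinearMap p.primeCompl M x)
    simp only [LinearMap.comp_apply] at h1 h3 ⊢
    rw [← h2, h1]
    simp only [LinearMap.smul_apply, LinearMap.comp_apply, LinearMap.restrictScalars_apply, LinearMap.id_apply] at h3 ⊢
    rw [LinearMap.map_smul_of_tower, h3, LinearMap.map_smul_of_tower]
  obtain ⟨t, ht⟩ := Module.Finite.exists_smul_of_comp_eq_of_isLocalizedModule p.primeCompl _ _ _ hb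
  refine ⟨t * u, (t * u).2, kills.of_factor ((t : R) • a) g ?_⟩
  ext x
  have := LinearMap.congr_fun ht x
  simp only [LinearMap.smul_apply, LinearMap.comp_apply, map_smul, LinearMap.id_apply] at this ⊢
  rw [mul_smul]
  exact this

theorem factor_locfree [IsNoetherianRing R] [Module.Finite R M] (p : Ideal R) [p.IsPrime]
    (s : R) (hsp : s ∉ p) (hk : kills s M) :
    Module.Free (Localization.AtPrime p) (LocalizedModule p.primeCompl M) := by
  obtain ⟨F, K, f, g, _, _, _, h⟩ := exists_cover M
  obtain ⟨a, ha⟩ := hk.factor h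
  have : Module.Free (Localization.AtPrime p) (LocalizedModule p.primeCompl F) :=
    Module.free_of_isLocalizedModule p.primeCompl (LocalizedModule.mkLinearMap p.primeCompl F)
  have hunit : IsUnit (algebraMap R (Localization.AtPrime p) s) :=
    IsLocalization.map_units (M := p.primeCompl) (Localization.AtPrime p) ⟨s, hsp⟩
  obtain ⟨v, hv⟩ := hunit
  have hcomp : LocalizedModule.map p.primeCompl g ∘ₗ LocalizedModule.map p.primeCompl a =
      algebraMap R (Localization.AtPrime p) s • LinearMap.id := by
    ext x
    induction x using LocalizedModule.induction_on with
    | h m r =>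
      have := LinearMap.congr_fun ha m
      simp only [LinearMap.comp_apply, LinearMap.smul_apply, LinearMap.id_apply] at this
      simp [this, LocalizedModule.smul'_mk]
  have : Module.Projective (Localization.AtPrime p) (LocalizedModule p.primeCompl M) := by
    refine Module.Projective.of_split (LocalizedModule.map p.primeCompl a)
      (((v⁻¹ : (Localization.AtPrime p)ˣ) : Localization.AtPrime p) • LocalizedModule.map p.primeCompl g) ?_
    rw [LinearMap.smul_comp, hcomp, ← hv, smul_smul]
    simp
  have hfl : Module.Flat (Localization.AtPrime p) (LocalizedModule p.primeCompl M) :=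
    @Module.Flat.of_projective _ _ _ _ _ this
  exact Module.free_of_flat_of_isLocalRing

variable [IsLocalRing R]

/-- the modules in `PD_0^n`, in terms of `Ext` -/
def PP (n : ℕ) (M : ModuleCat.{u} R) : Prop :=
  Module.Finite R M ∧ PdLT (n+1) M ∧
    ∀ p : Ideal R, p.IsPrime → p ≠ IsLocalRing.maximalIdeal R → ∃ s ∉ p, kills s M

theorem locfree_iff [IsNoetherianRing R] [Module.Finite R M] :
    (∀ p : PrimeSpectrum R, p.asIdeal ≠ IsLocalRing.maximalIdeal R →
      Module.Free (Localization.AtPrime p.asIdeal) (LocalizedModule p.asIdeal.primeCompl M)) ↔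
    ∀ p : Ideal R, p.IsPrime → p ≠ IsLocalRing.maximalIdeal R → ∃ s ∉ p, kills s M := by
  constructor
  · intro hM p hp hpm
    exact locfree_factor p (hM ⟨p, hp⟩ hpm)
  · intro hM p hpm
    obtain ⟨s, hs, hk⟩ := hM p.asIdeal p.2 hpm
    exact factor_locfree p.asIdeal s hs hk

theorem mem_PD0n [IsNoetherianRing R] (n : ℕ) : M ∈ PD0n R n ↔ PP n M := by
  constructor
  · rintro ⟨h1, h2, h3⟩
    exact ⟨h1, (pdLE_iff n).mp h2, locfree_iff.mp h3⟩
  · rintro ⟨h1, h2, h3⟩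
    exact ⟨h1, (pdLE_iff n).mpr h2, locfree_iff.mpr h3⟩

theorem mem_PD0 [IsNoetherianRing R] : M ∈ PD0 R ↔ ∃ n, PP n M := by
  constructor
  · rintro ⟨h1, ⟨n, h2⟩, h3⟩
    exact ⟨n, h1, (pdLE_iff n).mp h2, locfree_iff.mp h3⟩
  · rintro ⟨n, h1, h2, h3⟩
    exact ⟨h1, ⟨n, (pdLE_iff n).mpr h2⟩, locfree_iff.mpr h3⟩

theorem PP.mono {n m : ℕ} (hnm : n ≤ m) (h : PP n M) : PP m M :=
  ⟨h.1, h.2.1.mono (by omega), h.2.2⟩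

theorem PP.retract {n : ℕ} (h : PP n M) (a : N →ₗ[R] M) (b : M →ₗ[R] N) (hab : b ∘ₗ a = LinearMap.id) : PP n N := by
  have := h.1
  refine ⟨Module.Finite.of_surjective b (fun x => ⟨a x, LinearMap.congr_fun hab x⟩), h.2.1.retract a b hab, ?_⟩
  intro p hp hpm
  obtain ⟨s, hs, hk⟩ := h.2.2 p hp hpm
  exact ⟨s, hs, hk.retract a b hab⟩

theorem PP.iso {n : ℕ} (h : PP n M) (e : M ≃ₗ[R] N) : PP n N :=
  h.retract e.symm.toLinearMap e.toLinearMap (by ext; simp)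

theorem PP.mid {n : ℕ} {f : A →ₗ[R] B} {g : B →ₗ[R] C} (h : IsSES f g) (hA : PP n A) (hC : PP n C) : PP n B := by
  have := hA.1
  have := hC.1
  refine ⟨?_, PdLT.mid h hA.2.1 hC.2.1, ?_⟩
  · have : Module.Finite R (LinearMap.ker g) := by
      rw [← h.2.2]; infer_instance
    have e := g.quotKerEquivOfSurjective h.2.1
    have : Module.Finite R (B ⧸ LinearMap.ker g) := Module.Finite.equiv e.symm
    exact Module.Finite.of_submodule_quotient (LinearMap.ker g)
  intro p hp hpm
  obtain ⟨s, hs, hk⟩ := hA.2.2 p hp hpm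
  obtain ⟨s', hs', hk'⟩ := hC.2.2 p hp hpm
  exact ⟨s' * s, fun hh => (hp.mem_or_mem hh).elim hs' hs, kills.mid h hk hk'⟩

theorem PP.left [IsNoetherianRing R] {n m : ℕ} {f : A →ₗ[R] B} {g : B →ₗ[R] C} (h : IsSES f g) (hB : PP m B) (hC : PP n C)
    (hA : PdLT (n+1) A) : PP n A := by
  have := hB.1
  refine ⟨Module.Finite.of_injective f h.1, hA, ?_⟩
  intro p hp hpm
  obtain ⟨s, hs, hk⟩ := hB.2.2 p hp hpm
  obtain ⟨s', hs', hk'⟩ := hC.2.2 p hp hpm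
  exact ⟨s * s', fun hh => (hp.mem_or_mem hh).elim hs hs', kills.left h hk hk'⟩

theorem PP.of_proj {n : ℕ} [Module.Finite R M] [Module.Projective R M] : PP n M := by
  refine ⟨inferInstance, PdLT.of_proj.mono (by omega), ?_⟩
  intro p hp hpm
  exact ⟨1, fun h => hp.ne_top ((Ideal.eq_top_iff_one p).mpr h), fun i Y x => by rw [ext_proj x, smul_zero]⟩

theorem PP.kernel [IsNoetherianRing R] {n : ℕ} {f : A →ₗ[R] B} {g : B →ₗ[R] C} (h : IsSES f g) (hB : PP n B) (hC : PP n C) :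
    PP n A :=
  PP.left h hB hC (PdLT.left h hB.2.1 (hC.2.1.mono (by omega)))

/-- kernels of surjections from projectives drop the dimension -/
theorem PP.syz [IsNoetherianRing R] {n : ℕ} {f : A →ₗ[R] B} {g : B →ₗ[R] C} (h : IsSES f g) [Module.Finite R B] [Module.Projective R B]
    (hC : PP (n+1) C) : PP n A := by
  have h1 : PP (n+1) A := PP.kernel h PP.of_proj hC
  exact ⟨h1.1, PdLT.left h (PdLT.of_proj.mono (by omega)) hC.2.1, h1.2.2⟩

theorem PD0n_resolving [IsNoetherianRing R] (n : ℕ) : IsResolving R (PD0n R n) where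
  fg M hM := hM.1
  iso_closed M N e hM := by
    rw [mem_PD0n] at *
    exact hM.iso e.some
  proj_mem M _ _ := by
    rw [mem_PD0n]
    exact PP.of_proj
  summand_closed M N h := by
    rw [mem_PD0n] at *
    exact h.retract (M := ModuleCat.of R (M × N)) (LinearMap.inl R M N) (LinearMap.fst R M N) (by ext; simp)
  ext_closed A B C f g h hA hC := by
    rw [mem_PD0n] at *
    exact PP.mid h hA hC
  syzygy_closed K P M f g h _ _ _ hM := by
    rw [mem_PD0n] at *
    exact PP.kernel h PP.of_proj hM

end
end Helpers3
end ResolvPaper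

namespace ResolvPaper
section Helpers4
set_option linter.unusedSectionVars false
open Abelian
variable {R : Type u} [CommRing R]

section
variable {A B C D M N F : ModuleCat.{u} R} {s r : R}

theorem IsSES.desc {f : A →ₗ[R] B} {g : B →ₗ[R] C} (h : IsSES f g) (v : B →ₗ[R] D) (hv : v ∘ₗ f = 0) :
    ∃ w : C →ₗ[R] D, w ∘ₗ g = v := by
  have hk : LinearMap.ker g ≤ LinearMap.ker v := by
    rw [← h.2.2]
    rintro _ ⟨x, rfl⟩
    exact LinearMap.congr_fun hv x
  refine ⟨(LinearMap.ker g).liftQ v hk ∘ₗ (g.quotKerEquivOfSurjective h.2.1).symm.toLinearMap, ?_⟩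
  ext x
  have : (g.quotKerEquivOfSurjective h.2.1).symm (g x) = (LinearMap.ker g).mkQ x := by
    rw [LinearEquiv.symm_apply_eq]
    simp
  simp [this]

theorem free_eq_of_functionals [Module.Free R F] {x y : F} (h : ∀ ψ : F →ₗ[R] R, ψ x = ψ y) : x = y := by
  let b := Module.Free.chooseBasis R F
  apply b.repr.injective
  ext i
  exact h (b.coord i)

/-- extending maps to a finite free module -/
theorem extend_to_free [Module.Finite R F] [Module.Free R F] (f : A →ₗ[R] B) (v : A →ₗ[R] F)
    (h : ∀ ψ : F →ₗ[R] R, ∃ w : B →ₗ[R] R, w ∘ₗ f = ψ ∘ₗ v) : ∃ w : B →ₗ[R] F, w ∘ₗ f = v := by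
  let b := Module.Free.chooseBasis R F
  choose w hw using fun i => h (b.coord i)
  refine ⟨b.equivFun.symm.toLinearMap ∘ₗ LinearMap.pi w, ?_⟩
  ext x
  apply b.equivFun.injective
  ext i
  have h1 := LinearMap.congr_fun (hw i) x
  simp only [LinearMap.comp_apply, LinearEquiv.coe_coe, LinearEquiv.apply_symm_apply, LinearMap.pi_apply]
  exact h1

variable [IsLocalRing R]

/-- an abstract version of `Tr Ω^{j-1} k` -/
def Ch : ℕ → ModuleCat.{u} R → Prop
  | 0, T => Nonempty (T ≃ₗ[R] R)
  | j+1, T => ∃ (T' H : ModuleCat.{u} R) (f : T' →ₗ[R] H) (g : H →ₗ[R] T), Ch j T' ∧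
      Module.Finite R H ∧ Module.Free R H ∧ IsSES f g ∧
      (∀ φ : T' →ₗ[R] R, (j = 0 → ∀ x, φ x ∈ IsLocalRing.maximalIdeal R) → ∃ ψ : H →ₗ[R] R, ψ ∘ₗ f = φ) ∧
      (j = 0 → ∀ (ψ : H →ₗ[R] R) (x : T'), ψ (f x) ∈ IsLocalRing.maximalIdeal R)

variable {j : ℕ} {T : ModuleCat.{u} R}

theorem Ch.finite (h : Ch j T) : Module.Finite R T := by
  cases j with
  | zero => exact Module.Finite.equiv h.some.symm
  | succ j =>
    obtain ⟨T', H, f, g, _, _, _, hs, _⟩ := h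
    exact Module.Finite.of_surjective g hs.2.1

theorem Ch.pd (h : Ch j T) : PdLT (j+1) T := by
  induction j generalizing T with
  | zero =>
    have : Module.Projective R T := Module.Projective.of_equiv h.some.symm
    exact PdLT.of_proj
  | succ j ih =>
    obtain ⟨T', H, f, g, hT', _, _, hs, _⟩ := h
    exact PdLT.right hs (ih hT') (PdLT.of_proj.mono (by omega))

theorem Ch.factor (h : Ch j T) (hs : s ∈ IsLocalRing.maximalIdeal R) :
    ∃ (G : ModuleCat.{u} R) (a : T →ₗ[R] G) (b : G →ₗ[R] T), Module.Finite R G ∧ Module.Free R G ∧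
      b ∘ₗ a = s • LinearMap.id ∧
      (j = 0 → ∀ (ψ : G →ₗ[R] R) x, ψ (a x) ∈ IsLocalRing.maximalIdeal R) := by
  induction j generalizing T with
  | zero =>
    obtain ⟨e⟩ := h
    refine ⟨ModuleCat.of R R, s • e.toLinearMap, e.symm.toLinearMap, ?_, ?_, ?_, ?_⟩
    · change Module.Finite R R; infer_instance
    · change Module.Free R R; infer_instance
    · ext x
      have : e.symm (s • e x) = s • x := by rw [map_smul, e.symm_apply_apply]
      exact this
    · intro _ ψ x
      have : ψ ((s • e.toLinearMap : T →ₗ[R] R) x) = s * ψ (e x) := by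
        rw [LinearMap.smul_apply]
        exact map_smul ψ s (e x)
      rw [this]
      exact Ideal.mul_mem_right _ _ hs
  | succ j ih =>
    obtain ⟨T', H, f, g, hT', _, _, hf, hφ, _⟩ := h
    obtain ⟨G, a, b, _, _, hab, hj⟩ := ih hT'
    obtain ⟨w, hw⟩ := extend_to_free f a (fun ψ => hφ (ψ ∘ₗ a) (fun hj0 x => hj hj0 ψ x))
    obtain ⟨v, hv⟩ := hf.desc (s • LinearMap.id - f ∘ₗ b ∘ₗ w) (by
      ext x
      have h1 := LinearMap.congr_fun hw x
      have h2 := LinearMap.congr_fun hab x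
      simp only [LinearMap.comp_apply, LinearMap.smul_apply, LinearMap.id_apply, LinearMap.sub_apply] at h1 h2 ⊢
      rw [h1, h2]
      simp)
    refine ⟨H, v, g, inferInstance, inferInstance, ?_, by simp⟩
    ext x
    obtain ⟨y, rfl⟩ := hf.2.1 x
    have := LinearMap.congr_fun hv y
    simp only [LinearMap.comp_apply, LinearMap.smul_apply, LinearMap.id_apply, LinearMap.sub_apply] at this ⊢
    rw [this]
    simp [hf.apply_zero]

theorem Ch.kills (h : Ch j T) (hs : s ∈ IsLocalRing.maximalIdeal R) : kills s T := by
  obtain ⟨G, a, b, _, _, hab, _⟩ := h.factor hs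
  exact kills.of_factor a b hab

theorem Ch.PP (h : Ch j T) : PP j T := by
  refine ⟨h.finite, h.pd, ?_⟩
  intro p hp hpm
  have hle : p ≤ IsLocalRing.maximalIdeal R := IsLocalRing.le_maximalIdeal hp.ne_top
  obtain ⟨s, hs, hsp⟩ := SetLike.exists_of_lt (lt_of_le_of_ne hle hpm)
  exact ⟨s, hsp, h.kills hs⟩

theorem Ch.ext_zero (h : Ch j T) (i : ℕ) (hi : i + 1 < j) (x : Ext T (ModuleCat.of R R) (i+1)) : x = 0 := by
  induction j generalizing T i with
  | zero => omega
  | succ j ih =>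
    obtain ⟨T', H, f, g, hT', _, _, hs, hφ, _⟩ := h
    obtain ⟨w, rfl⟩ := ex3 hs x (ext_proj _)
    cases i with
    | zero =>
      obtain ⟨φ, rfl⟩ := hm_surj w
      obtain ⟨ψ, rfl⟩ := hφ φ (by omega)
      have := pre_hm (Y := ModuleCat.of R R) f ψ
      rw [← this, dlt_pre]
    | succ i =>
      rw [ih hT' i (by omega) w, dlt_zero]

theorem Ch.theta (h : Ch (j+1) T) : ∃ θ : Ext T (ModuleCat.of R R) (j+1),
    (∀ x : Ext T (ModuleCat.of R R) (j+1), ∃ r : R, x = r • θ) ∧ θ ≠ 0 ∧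
    (∀ (i n : ℕ) (hn : i + (j+1) = n) (N : ModuleCat.{u} R),
      (∀ l, i < l → l < n → ∀ x : Ext N (ModuleCat.of R R) l, x = 0) →
      ∀ ξ : Ext N (ModuleCat.of R R) n, (∀ s ∈ IsLocalRing.maximalIdeal R, s • ξ = 0) →
      ∃ y : Ext N T i, y.comp θ hn = ξ) := by
  induction j generalizing T with
  | zero =>
    obtain ⟨T', H, f, g, ⟨e⟩, _, _, hs, hφ, hψ⟩ := h
    let e' : T' →ₗ[R] (ModuleCat.of R R) := e.toLinearMap
    let e'' : (ModuleCat.of R R) →ₗ[R] T' := e.symm.toLinearMap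
    refine ⟨dlt hs (hm e'), ?_, ?_, ?_⟩
    · intro x
      obtain ⟨w, rfl⟩ := ex3 hs x (ext_proj _)
      obtain ⟨φ, rfl⟩ := hm_surj w
      refine ⟨φ (e.symm 1), ?_⟩
      rw [← dlt_smul, smul_hm]
      congr 2
      ext x
      have h1 : φ (e.symm (e x • 1)) = e x • φ (e.symm 1) := by rw [map_smul, map_smul]
      rw [smul_eq_mul, mul_one, e.symm_apply_apply] at h1
      rw [h1]
      change _ = φ (e.symm 1) * e x
      exact mul_comm _ _
    · intro h0
      obtain ⟨z, hz⟩ := ex1 hs _ h0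
      obtain ⟨ψ, rfl⟩ := hm_surj z
      rw [pre_hm] at hz
      have h1 := LinearMap.congr_fun (hm_inj hz) (e.symm 1)
      have h2 := hψ rfl ψ (e.symm 1)
      have h3 : e' (e.symm 1) = (1 : R) := e.apply_symm_apply 1
      rw [h3] at h1
      change ψ (f (e.symm 1)) = 1 at h1
      rw [h1] at h2
      exact (Ideal.ne_top_iff_one _).mp (IsLocalRing.maximalIdeal.isMaximal R).ne_top h2
    · rintro i _ rfl N hN ξ hξ
      have h1 : post f (post e'' ξ) = 0 := by
        apply ext_free_test
        intro ψ
        have h2 := post_post (W := ModuleCat.of R R) f ψ (post e'' ξ)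
        rw [h2]
        have h3 := post_post (W := ModuleCat.of R R) e'' (ψ ∘ₗ f) ξ
        rw [h3]
        have h4 : ((ψ ∘ₗ f) ∘ₗ e'' : R →ₗ[R] R) = ψ (f (e.symm 1)) • LinearMap.id := by
          ext
          change ψ (f (e.symm 1)) = ψ (f (e.symm 1)) * 1
          rw [mul_one]
        have h5 := smul_eq_post (ψ (f (e.symm 1))) ξ
        rw [hξ _ (hψ rfl ψ _)] at h5
        rw [h5]
        exact congrArg (fun t : R →ₗ[R] R => post (Y := ModuleCat.of R R) (Z := ModuleCat.of R R) t ξ) h4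
      obtain ⟨y, hy⟩ := cex1 hs _ h1
      refine ⟨y, ?_⟩
      have h6 : post e' (cdl hs y) = ξ := by
        rw [hy, post_post]
        have h7 : e' ∘ₗ e'' = LinearMap.id := by
          ext
          exact e.apply_symm_apply 1
        rw [h7, post_id]
      rw [← h6]
      simp only [dlt, post, cdl, hm]
      rw [Ext.comp_assoc (a₁₂ := i+1) (a₂₃ := 0+1) (h := by omega)]
  | succ j ih =>
    obtain ⟨T', H, f, g, hT', _, _, hs, hφ, hψ⟩ := h
    obtain ⟨θ, h1, h2, h3⟩ := ih hT'
    refine ⟨dlt hs θ, ?_, ?_, ?_⟩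
    · intro x
      obtain ⟨w, rfl⟩ := ex3 hs x (ext_proj _)
      obtain ⟨r, rfl⟩ := h1 w
      exact ⟨r, dlt_smul _ _ _⟩
    · intro h0
      obtain ⟨z, hz⟩ := ex1 hs _ h0
      rw [ext_proj z, pre_zero] at hz
      exact h2 hz.symm
    · intro i n hn N hN ξ hξ
      obtain ⟨y', hy'⟩ := h3 (i+1) n (by omega) N (fun l hl => hN l (by omega)) ξ hξ
      have h4 : post f y' = 0 := ext_free_zero (fun x => hN (i+1) (by omega) (by omega) x) _
      obtain ⟨y, hy⟩ := cex1 hs _ h4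
      refine ⟨y, ?_⟩
      rw [← hy', ← hy]
      simp only [dlt, cdl]
      rw [Ext.comp_assoc (a₁₂ := i+1) (a₂₃ := j+1+1) (h := by omega)]

theorem Ch.not_pd (h : Ch (j+1) T) : ¬ PdLT (j+1) T := by
  intro h1
  obtain ⟨θ, _, h2, _⟩ := h.theta
  exact h2 (h1 _ le_rfl _ θ)

theorem Ch.ext_res {K : ModuleCat.{u} R} {t : ℕ} (hK : ∀ i < t, ∀ x : Ext K (ModuleCat.of R R) i, x = 0)
    (h : Ch j T) (i : ℕ) (hi : i + j < t) (x : Ext K T i) : x = 0 := by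
  induction j generalizing T i with
  | zero =>
    obtain ⟨e⟩ := h
    have : Module.Finite R T := Module.Finite.equiv e.symm
    have : Module.Free R T := Module.Free.of_equiv e.symm
    exact ext_free_zero (hK i (by omega)) x
  | succ j ih =>
    obtain ⟨T', H, f, g, hT', _, _, hs, hφ, hψ⟩ := h
    obtain ⟨z, rfl⟩ := cex3 hs x (ih hT' (i+1) (by omega) _)
    rw [ext_free_zero (hK i (by omega)) z, post_zero]

/-- an element killed by the maximal ideal gives a map from the residue field -/
theorem exists_res_map {M : ModuleCat.{u} R} (x : M) (hx : ∀ s ∈ IsLocalRing.maximalIdeal R, s • x = 0) :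
    ∃ φ : residueMod R →ₗ[R] M, φ (IsLocalRing.residue R 1) = x := by
  have hle : IsLocalRing.maximalIdeal R ≤ LinearMap.ker (LinearMap.toSpanSingleton R M x) := by
    intro s hs
    rw [LinearMap.mem_ker, LinearMap.toSpanSingleton_apply]
    exact hx s hs
  refine ⟨(Submodule.liftQ (IsLocalRing.maximalIdeal R) (LinearMap.toSpanSingleton R M x) hle :
    (R ⧸ IsLocalRing.maximalIdeal R) →ₗ[R] M), ?_⟩
  have := Submodule.liftQ_apply (IsLocalRing.maximalIdeal R) (LinearMap.toSpanSingleton R M x) (h := hle) (1 : R)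
  rw [LinearMap.toSpanSingleton_apply, one_smul] at this
  exact this

theorem soc_zero {M : ModuleCat.{u} R} (hM : ∀ x : Ext (residueMod R) M 0, x = 0) (x : M)
    (hx : ∀ s ∈ IsLocalRing.maximalIdeal R, s • x = 0) : x = 0 := by
  obtain ⟨φ, rfl⟩ := exists_res_map x hx
  have h := hm_inj ((hM (hm φ)).trans hm_zero.symm)
  rw [h]
  rfl

theorem Ch.exists_next [IsNoetherianRing R] {t : ℕ}
    (hK : ∀ i < t, ∀ x : Ext (residueMod R) (ModuleCat.of R R) i, x = 0)
    (h : Ch j T) (hj : j < t) : ∃ T'' : ModuleCat.{u} R, Ch (j+1) T'' := by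
  have := h.finite
  let D : Submodule R (T →ₗ[R] R) :=
    { carrier := {φ | j = 0 → ∀ x, φ x ∈ IsLocalRing.maximalIdeal R}
      add_mem' := fun {a b} ha hb h0 x => Ideal.add_mem _ (ha h0 x) (hb h0 x)
      zero_mem' := fun _ _ => Ideal.zero_mem _
      smul_mem' := fun c a ha h0 x => Ideal.mul_mem_left _ c (ha h0 x) }
  have hN : IsNoetherian R (T →ₗ[R] R) := inferInstance
  obtain ⟨n, φ, hφ⟩ := (Submodule.fg_iff_exists_fin_generating_family (N := D)).mp (hN.noetherian D)
  let f : T →ₗ[R] (Fin n → R) := LinearMap.pi φ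
  have hφD : ∀ k, φ k ∈ D := fun k => hφ ▸ Submodule.subset_span ⟨k, rfl⟩
  have hlift : ∀ ψ ∈ D, ∃ c : (Fin n → R) →ₗ[R] R, c ∘ₗ f = ψ := by
    intro ψ hψ
    rw [← hφ] at hψ
    induction hψ using Submodule.span_induction with
    | mem x hx =>
      obtain ⟨k, rfl⟩ := hx
      exact ⟨LinearMap.proj k, by ext; rfl⟩
    | zero => exact ⟨0, by simp⟩
    | add x y _ _ hx hy =>
      obtain ⟨a, ha⟩ := hx
      obtain ⟨b, hb⟩ := hy
      exact ⟨a + b, by rw [LinearMap.add_comp, ha, hb]⟩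
    | smul r x _ hx =>
      obtain ⟨a, ha⟩ := hx
      exact ⟨r • a, by rw [LinearMap.smul_comp, ha]⟩
  have hf : Function.Injective f := by
    rw [injective_iff_map_eq_zero]
    intro x hx
    apply soc_zero (fun y => h.ext_res hK 0 (by omega) y)
    intro s hs
    obtain ⟨G, a, b, _, _, hab, hj0⟩ := h.factor hs
    have ha : a x = 0 := by
      apply free_eq_of_functionals
      intro ψ
      obtain ⟨c, hc⟩ := hlift (ψ ∘ₗ a) (fun h0 x => hj0 h0 ψ x)
      have := LinearMap.congr_fun hc x
      simp only [LinearMap.comp_apply] at this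
      rw [← this, hx]
      simp
    have := LinearMap.congr_fun hab x
    simp only [LinearMap.comp_apply, LinearMap.smul_apply, LinearMap.id_apply] at this
    rw [← this, ha, map_zero]
  refine ⟨ModuleCat.of R ((Fin n → R) ⧸ LinearMap.range f), T, ModuleCat.of R (Fin n → R), f,
    (LinearMap.range f).mkQ, h, ?_, ?_, ⟨hf, Submodule.mkQ_surjective _, by simp⟩, ?_, ?_⟩
  · change Module.Finite R (Fin n → R); infer_instance
  · change Module.Free R (Fin n → R); infer_instance
  · intro ψ hψ
    exact hlift ψ hψ
  · intro h0 ψ x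
    change (Fin n → R) →ₗ[R] R at ψ
    rw [← Ideal.Quotient.eq_zero_iff_mem]
    have h1 : ψ (f x) = ∑ k, ψ (Pi.single k 1) * φ k x := by
      conv_lhs => rw [← Finset.univ_sum_single (f x), map_sum]
      apply Finset.sum_congr rfl
      intro k _
      have : (Pi.single k (f x k) : Fin n → R) = (φ k x) • Pi.single k 1 := by
        rw [← Pi.single_smul]; simp [f]
      rw [this, map_smul, smul_eq_mul, mul_comm]
    rw [Ideal.Quotient.eq_zero_iff_mem]
    have h2 : ψ (f x) ∈ IsLocalRing.maximalIdeal R := by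
      rw [h1]
      exact Ideal.sum_mem _ fun k _ => Ideal.mul_mem_left _ _ (hφD k h0 x)
    exact h2

end
end Helpers4
end ResolvPaper

namespace ResolvPaper
section Helpers5
set_option linter.unusedSectionVars false
open Abelian
variable {R : Type u} [CommRing R]
variable {A B C D M N F : ModuleCat.{u} R} {s r : R} [IsLocalRing R] {n : ℕ}

theorem prod_ses (A B : ModuleCat.{u} R) : IsSES (A := A) (B := ModuleCat.of R (A × B)) (C := B)
    (LinearMap.inl R A B) (LinearMap.snd R A B) :=
  ⟨LinearMap.inl_injective, LinearMap.snd_surjective, LinearMap.range_inl R A B⟩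

theorem PP.prod (hA : PP n A) (hB : PP n B) : PP n (ModuleCat.of R (A × B)) :=
  PP.mid (prod_ses A B) hA hB

variable [IsNoetherianRing R]

theorem PP.soc (hN : PP n N) (i : ℕ) (hE : ¬ ∀ x : Ext N (ModuleCat.of R R) (i+1), x = 0) :
    ∃ ξ : Ext N (ModuleCat.of R R) (i+1), ξ ≠ 0 ∧ ∀ s ∈ IsLocalRing.maximalIdeal R, s • ξ = 0 := by
  push Not at hE
  obtain ⟨x, hx⟩ := hE
  obtain ⟨p, hp, _⟩ := exists_le_isAssociatedPrime_of_isNoetherianRing R x hx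
  rw [isAssociatedPrime_iff] at hp
  obtain ⟨hpp, ξ, hξ⟩ := hp
  have hmem : ∀ s, s ∈ p ↔ s • ξ = 0 := by
    intro s
    rw [hξ, Submodule.mem_colon_singleton, Submodule.mem_bot]
  refine ⟨ξ, ?_, ?_⟩
  · rintro rfl
    apply hpp.ne_top
    rw [Ideal.eq_top_iff_one, hmem, smul_zero]
  · have : p = IsLocalRing.maximalIdeal R := by
      by_contra hne
      obtain ⟨s, hs, hk⟩ := hN.2.2 p hpp hne
      exact hs ((hmem s).mpr (hk _ _ ξ))
    intro s hs
    rw [← hmem, this]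
    exact hs

theorem PdLT.of_all [Module.Finite R N] (hN : PdLT (n+1) N)
    (h : ∀ i, i + 1 ≤ n → ∀ x : Ext N (ModuleCat.of R R) (i+1), x = 0) : PdLT 1 N := by
  induction n with
  | zero => exact hN
  | succ n ih => exact ih (hN.drop (h n le_rfl)) (fun i hi => h i (by omega))

theorem isUnit_kill {E : Type*} [AddCommGroup E] [Module R E] {ξ : E} (hξ : ξ ≠ 0) {r : R} (h : r • ξ = 0) :
    r ∈ IsLocalRing.maximalIdeal R := by
  rw [IsLocalRing.mem_maximalIdeal]
  intro hu
  exact hξ ((hu.smul_eq_zero).mp h)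

theorem split_proj {N F Y : ModuleCat.{u} R} [Module.Projective R F] {l : ℕ}
    (x : Ext (ModuleCat.of R (N × F)) Y (l+1)) :
    x = pre (show ModuleCat.of R (N × F) →ₗ[R] N from LinearMap.fst R N F)
      (pre (show N →ₗ[R] ModuleCat.of R (N × F) from LinearMap.inl R N F) x) := by
  have h1 := ext_split x
  have h2 : pre (show F →ₗ[R] ModuleCat.of R (N × F) from LinearMap.inr R N F) x = 0 := ext_proj _
  rw [show pre (B := ModuleCat.of R (N × F)) (LinearMap.inr R N F) x = 0 from h2, pre_zero, add_zero] at h1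
  exact h1

theorem cover_ses {N T : ModuleCat.{u} R} [Module.Finite R T] (φ : N →ₗ[R] T) :
    ∃ (F K E : ModuleCat.{u} R) (f : K →ₗ[R] E) (g : E →ₗ[R] T) (i1 : N →ₗ[R] E) (p1 : E →ₗ[R] N),
      E = ModuleCat.of R (N × F) ∧
      Module.Finite R F ∧ Module.Free R F ∧ IsSES f g ∧ g ∘ₗ i1 = φ ∧ p1 ∘ₗ i1 = LinearMap.id ∧
      ∀ {Y : ModuleCat.{u} R} {l : ℕ} (x : Ext E Y (l+1)), pre p1 (pre i1 x) = x := by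
  obtain ⟨F, _, _, p, _, _, _, hp⟩ := exists_cover T
  let π : (N × F) →ₗ[R] T := LinearMap.coprod φ p
  have hπs : Function.Surjective π := by
    intro x
    obtain ⟨y, rfl⟩ := hp.2.1 x
    exact ⟨((0 : N), y), by simp [π]⟩
  refine ⟨F, ModuleCat.of R (LinearMap.ker π), ModuleCat.of R (N × F), (LinearMap.ker π).subtype, π,
    LinearMap.inl R N F, LinearMap.fst R N F, rfl, inferInstance, inferInstance,
    ⟨Subtype.val_injective, hπs, Submodule.range_subtype _⟩, ?_, LinearMap.fst_comp_inl R N F, 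
    fun x => (split_proj x).symm⟩
  have : π ∘ₗ (LinearMap.inl R N F) = φ := by ext; simp [π]
  exact this

/-- one step of the filtration -/
theorem filt_step {T : ModuleCat.{u} R} {j : ℕ} (hT : Ch (j+1) T) (hj : j + 1 ≤ n) (hN : PP n N)
    (hE : ∀ i, i < j → ∀ x : Ext N (ModuleCat.of R R) (i+1), x = 0)
    (ξ : Ext N (ModuleCat.of R R) (j+1)) (hξ0 : ξ ≠ 0) (hξ : ∀ s ∈ IsLocalRing.maximalIdeal R, s • ξ = 0) :
    ∃ (F K E : ModuleCat.{u} R) (f : K →ₗ[R] E) (g : E →ₗ[R] T)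
      (c : K →ₗ[R] N), E = ModuleCat.of R (N × F) ∧
      IsSES f g ∧ PP n K ∧ (∀ i, i < j → ∀ x : Ext K (ModuleCat.of R R) (i+1), x = 0) ∧
      pre c ξ = 0 ∧ ∀ y : Ext K (ModuleCat.of R R) (j+1), ∃ x : Ext N (ModuleCat.of R R) (j+1), pre c x = y := by
  obtain ⟨θ, hgen, hne, hlift⟩ := hT.theta
  obtain ⟨y, hy⟩ := hlift 0 (j+1) (by omega) N (fun l hl hlj x => by
    obtain ⟨l, rfl⟩ := Nat.exists_eq_add_of_le' (show 1 ≤ l by omega)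
    exact hE l (by omega) x) ξ hξ
  obtain ⟨φ, rfl⟩ := hm_surj y
  have hφ : pre φ θ = ξ := hy
  have := hT.finite
  obtain ⟨F, K, E, ι, π, i1, p1, hEq, _, _, hses, hπφ, hpi, hsplit⟩ := cover_ses φ
  have hπθ : pre π θ = pre p1 ξ := by
    rw [← hsplit (pre π θ), pre_pre i1 π, hπφ, hφ]
  have hi1 : pre i1 (pre p1 ξ) = ξ := by
    rw [pre_pre, hpi, pre_id]
  have hPE : PP n E := by rw [hEq]; exact PP.prod hN PP.of_proj
  refine ⟨F, K, E, ι, π, p1 ∘ₗ ι, hEq, hses, PP.kernel hses hPE (hT.PP.mono hj), ?_, ?_, ?_⟩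
  · intro i hi x
    have h0 : dlt hses x = 0 := by
      by_cases hij : i + 1 = j
      · subst hij
        obtain ⟨r, hr⟩ := hgen (dlt hses x)
        have h1 := pre_dlt hses x
        rw [hr, pre_smul, hπθ] at h1
        have h2 := congrArg (pre i1) h1
        rw [pre_smul, hi1, pre_zero] at h2
        rw [hr]
        exact hT.kills (isUnit_kill hξ0 h2) _ _ _
      · exact hT.ext_zero (i+1) (by omega) _
    obtain ⟨z, rfl⟩ := ex1 hses x h0
    rw [← hsplit z, hE i hi (pre i1 z), pre_zero, pre_zero]
  · rw [← pre_pre, ← hπθ, pre_pre_zero hses]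
  · intro y
    obtain ⟨z, rfl⟩ := ex1 hses y (hT.pd _ (by omega) _ _)
    refine ⟨pre i1 z, ?_⟩
    rw [← pre_pre, hsplit]

theorem filt {𝒳 : Set (ModuleCat.{u} R)} (hX : IsExtClosed R 𝒳)
    (hproj : ∀ M : ModuleCat.{u} R, Module.Finite R M → Module.Projective R M → M ∈ 𝒳)
    (hT : ∀ j, j + 1 ≤ n → ∃ T ∈ 𝒳, Ch (j+1) T) (hN : PP n N) : N ∈ 𝒳 := by
  suffices H : ∀ d ≤ n, ∀ N : ModuleCat.{u} R, PP n N →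
      (∀ i, i + 1 + d ≤ n → ∀ x : Ext N (ModuleCat.of R R) (i+1), x = 0) → N ∈ 𝒳 from
    H n le_rfl N hN (fun i hi => by omega)
  intro d
  induction d with
  | zero =>
    intro _ N hN h
    have := hN.1
    exact hproj N hN.1 ((PdLT.of_all hN.2.1 (fun i hi => h i (by omega))).proj le_rfl)
  | succ d ih =>
    intro hd N hN hE
    obtain ⟨j, hj⟩ := Nat.exists_eq_add_of_le hd
    obtain ⟨T, hTX, hT⟩ := hT j (by omega)
    have hfin := hN.1
    suffices H : ∀ U : Submodule R (Ext N (ModuleCat.of R R) (j+1)), ∀ N' : ModuleCat.{u} R, PP n N' →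
        (∀ i, i < j → ∀ x : Ext N' (ModuleCat.of R R) (i+1), x = 0) →
        ∀ q : Ext N (ModuleCat.of R R) (j+1) →ₗ[R] Ext N' (ModuleCat.of R R) (j+1),
          Function.Surjective q → LinearMap.ker q = U → N' ∈ 𝒳 from
      H ⊥ N hN (fun i hi => hE i (by omega)) LinearMap.id Function.surjective_id (by simp)
    have hwf : WellFoundedGT (Submodule R (Ext N (ModuleCat.of R R) (j+1))) := by
      have : Module.Finite R (ModuleCat.of R R) := by change Module.Finite R R; infer_instance
      infer_instance
    intro U
    induction U using hwf.induction with
    | ind U IH =>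
      intro N' hN' hE' q hq hU
      by_cases hz : ∀ x : Ext N' (ModuleCat.of R R) (j+1), x = 0
      · apply ih (by omega) N' hN'
        intro i hi
        by_cases hij : i = j
        · subst hij; exact hz
        · exact hE' i (by omega)
      · obtain ⟨ξ, hξ0, hξ⟩ := hN'.soc j hz
        obtain ⟨F, K, E, f, g, c, hEq, hs, hK, hEK, hc, hsurj⟩ := filt_step hT (by omega) hN' hE' ξ hξ0 hξ
        have hKX : K ∈ 𝒳 := by
          refine IH (LinearMap.ker (preL c ∘ₗ q)) ?_ K hK hEK (preL c ∘ₗ q) ?_ rfl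
          · rw [SetLike.lt_iff_le_and_exists]
            refine ⟨?_, ?_⟩
            · intro x hx
              rw [← hU, LinearMap.mem_ker] at hx
              rw [LinearMap.mem_ker, LinearMap.comp_apply, hx, map_zero]
            · obtain ⟨x, hx⟩ := hq ξ
              refine ⟨x, ?_, ?_⟩
              · rw [LinearMap.mem_ker, LinearMap.comp_apply, hx]
                exact hc
              · rw [← hU, LinearMap.mem_ker, hx]
                exact hξ0
          · intro y
            obtain ⟨x, hx⟩ := hsurj y
            obtain ⟨w, hw⟩ := hq x
            exact ⟨w, by rw [LinearMap.comp_apply, hw]; exact hx⟩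
        exact hX.2.1 N' F (hEq ▸ hX.2.2 K _ T f g hs hKX hTX)

end Helpers5
end ResolvPaper

namespace ResolvPaper
section Helpers6
set_option linter.unusedSectionVars false
open Abelian
variable {R : Type u} [CommRing R]
variable {A B C D M N F : ModuleCat.{u} R} {s r : R} [IsLocalRing R] {n : ℕ}

theorem e_elem {F1 F0 : Type u} [AddCommGroup F1] [Module R F1] [AddCommGroup F0] [Module R F0]
    [Module.Finite R F1] [Module.Free R F1] [Module.Finite R F0] [Module.Free R F0] (d : F1 →ₗ[R] F0)
    (h : ¬ ∃ l : F0 →ₗ[R] F1, l ∘ₗ d = LinearMap.id) :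
    ∃ (e : F1) (ψ : F1 →ₗ[R] R), ψ e = 1 ∧ ∀ χ : F0 →ₗ[R] R, χ (d e) ∈ IsLocalRing.maximalIdeal R := by
  rw [IsLocalRing.split_injective_iff_lTensor_residueField_injective, injective_iff_map_eq_zero] at h
  push Not at h
  obtain ⟨z, hz, hz0⟩ := h
  obtain ⟨e, rfl⟩ := TensorProduct.mk_surjective R F1 (IsLocalRing.ResidueField R) Ideal.Quotient.mk_surjective z
  have hχ : ∀ χ : F0 →ₗ[R] R, χ (d e) ∈ IsLocalRing.maximalIdeal R := by
    intro χ
    have h1 := congrArg (fun w => TensorProduct.rid R _ (χ.lTensor (IsLocalRing.ResidueField R) w)) hz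
    simp only [TensorProduct.mk_apply, LinearMap.lTensor_tmul, map_zero, TensorProduct.rid_tmul] at h1
    rw [Algebra.smul_def, mul_one] at h1
    exact Ideal.Quotient.eq_zero_iff_mem.mp h1
  have hu : ∃ ψ : F1 →ₗ[R] R, IsUnit (ψ e) := by
    by_contra hno
    push Not at hno
    apply hz0
    let b := Module.Free.chooseBasis R F1
    have h1 : e = ∑ i, b.repr e i • b i := (b.sum_repr e).symm
    rw [TensorProduct.mk_apply, h1, TensorProduct.tmul_sum]
    apply Finset.sum_eq_zero
    intro i _
    have h2 : b.repr e i ∈ IsLocalRing.maximalIdeal R := by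
      rw [IsLocalRing.mem_maximalIdeal]; exact hno (b.coord i)
    rw [TensorProduct.tmul_smul, TensorProduct.smul_tmul', Algebra.smul_def, mul_one]
    have h3 : algebraMap R (IsLocalRing.ResidueField R) (b.repr e i) = 0 := Ideal.Quotient.eq_zero_iff_mem.mpr h2
    rw [h3, TensorProduct.zero_tmul]
  obtain ⟨ψ, hψ⟩ := hu
  obtain ⟨v, hv⟩ := hψ
  refine ⟨e, (↑v⁻¹ : R) • ψ, ?_, hχ⟩
  rw [LinearMap.smul_apply, ← hv, smul_eq_mul, Units.inv_mul]

theorem exists_e {M K F0 : ModuleCat.{u} R} {d : K →ₗ[R] F0} {p : F0 →ₗ[R] M} (h : IsSES d p)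
    [Module.Finite R K] [Module.Finite R F0] [Module.Free R F0]
    (hM : PdLT 2 M) (hM' : ¬ PdLT 1 M) :
    Module.Free R K ∧ 
    ∃ (e : K) (ψ : K →ₗ[R] R), ψ e = 1 ∧ ∀ χ : F0 →ₗ[R] R, χ (d e) ∈ IsLocalRing.maximalIdeal R := by
  have h1 : PdLT 1 K := PdLT.left h PdLT.of_proj hM
  have := h1.proj le_rfl
  have : Module.Free R K := Module.free_of_flat_of_isLocalRing
  refine ⟨this, e_elem d ?_⟩
  rintro ⟨l, hl⟩
  apply hM'
  have hz : dlt h (hm (LinearMap.id : K →ₗ[R] K)) = 0 := by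
    rw [← hl, ← pre_hm, dlt_pre]
  obtain ⟨q, hq⟩ := retract_of_split h hz
  have := proj_of_retract q p hq
  exact PdLT.of_proj

variable [IsNoetherianRing R]

theorem Qn {T : ModuleCat.{u} R} (hT : Ch (n+1) T) (M : ModuleCat.{u} R) [Module.Finite R M]
    (hM : PdLT (n+2) M) (hM' : ¬ PdLT (n+1) M) :
    ∃ φ : T →ₗ[R] M, ∀ y : Ext T (ModuleCat.of R R) (n+1), ∃ x : Ext M (ModuleCat.of R R) (n+1), pre φ x = y := by
  induction n generalizing T M with
  | zero =>
    obtain ⟨T', H, f, g, ⟨q⟩, _, _, hs, hφ, hψ⟩ := hT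
    obtain ⟨F0, K, d, p, _, _, _, h⟩ := exists_cover M
    obtain ⟨_, e, ψ, he, hχ⟩ := exists_e h hM hM'
    let φ' : T' →ₗ[R] K := LinearMap.toSpanSingleton R K e ∘ₗ q.toLinearMap
    have hφ' : ∀ x, φ' x = q x • e := fun x => rfl
    obtain ⟨b, hb⟩ := extend_to_free f (d ∘ₗ φ') (fun χ => hφ (χ ∘ₗ d ∘ₗ φ') (fun _ x => by
      rw [LinearMap.comp_apply, LinearMap.comp_apply, hφ', map_smul, map_smul, smul_eq_mul]
      exact Ideal.mul_mem_left _ _ (hχ χ)))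
    obtain ⟨c, hc⟩ := hs.desc (p ∘ₗ b) (by rw [LinearMap.comp_assoc, hb, ← LinearMap.comp_assoc, h.comp_zero, LinearMap.zero_comp])
    refine ⟨c, fun y => ?_⟩
    obtain ⟨w, rfl⟩ := ex3 hs y (ext_proj _)
    obtain ⟨φ, rfl⟩ := hm_surj w
    let ψ' : K →ₗ[R] (ModuleCat.of R R) := (φ (q.symm 1) : R) • ψ
    refine ⟨dlt h (hm ψ'), ?_⟩
    rw [dlt_nat hs h φ' b c hb.symm hc.symm, pre_hm]
    congr 2
    ext x
    have h1 : φ (q.symm (q x • 1)) = q x • φ (q.symm 1) := by rw [map_smul, map_smul]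
    rw [smul_eq_mul, mul_one, q.symm_apply_apply] at h1
    rw [h1]
    change (φ (q.symm 1) : R) * ψ (φ' x) = (q x) * (φ (q.symm 1))
    rw [hφ', map_smul, he, smul_eq_mul, mul_one, mul_comm]
  | succ n ih =>
    obtain ⟨T', H, f, g, hT', _, _, hs, hφ, hψ⟩ := hT
    obtain ⟨F0, K, d, p, _, _, _, h⟩ := exists_cover M
    obtain ⟨φ', hφ'⟩ := ih hT' K (PdLT.left h (PdLT.of_proj.mono (by omega)) hM)
      (fun h1 => hM' (PdLT.right h h1 (PdLT.of_proj.mono (by omega))))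
    obtain ⟨b, hb⟩ := extend_to_free f (d ∘ₗ φ') (fun χ => hφ (χ ∘ₗ d ∘ₗ φ') (fun h0 => by omega))
    obtain ⟨c, hc⟩ := hs.desc (p ∘ₗ b) (by rw [LinearMap.comp_assoc, hb, ← LinearMap.comp_assoc, h.comp_zero, LinearMap.zero_comp])
    refine ⟨c, fun y => ?_⟩
    obtain ⟨w, rfl⟩ := ex3 hs y (ext_proj _)
    obtain ⟨x, rfl⟩ := hφ' w
    exact ⟨dlt h x, dlt_nat hs h φ' b c hb.symm hc.symm x⟩

theorem Rn {𝒳 : Set (ModuleCat.{u} R)} (hX : IsResolving R 𝒳) (hCh : ∀ j ≤ n, ∃ T : ModuleCat.{u} R, Ch j T)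
    (M : ModuleCat.{u} R) (hMX : M ∈ 𝒳) (hM : PP n M) (hn : n = 0 ∨ ¬ PdLT n M) :
    ∀ N, PP n N → N ∈ 𝒳 := by
  induction n generalizing M with
  | zero =>
    intro N hN
    exact hX.proj_mem N hN.1 (hN.2.1.proj le_rfl)
  | succ n ih =>
    have hn : ¬ PdLT (n+1) M := by simpa using hn
    have := hM.1
    obtain ⟨F0, K, d, p, _, _, _, h⟩ := exists_cover M
    have hsub : ∀ N, PP n N → N ∈ 𝒳 := by
      refine ih (fun j hj => hCh j (by omega)) K 
        (hX.syzygy_closed K F0 M d p h inferInstance inferInstance inferInstance hMX) (PP.syz h hM) ?_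
      rcases Nat.eq_zero_or_pos n with h0 | h0
      · exact Or.inl h0
      · exact Or.inr (fun h1 => hn (PdLT.right h h1 (PdLT.of_proj.mono (by omega))))
    obtain ⟨T, hT⟩ := hCh (n+1) le_rfl
    have hTX : T ∈ 𝒳 := by
      obtain ⟨φ, hφ⟩ := Qn hT M hM.2.1 hn
      obtain ⟨F, L, E, f, g, i1, p1, hEq, _, _, hses, hg, _, hsplit⟩ := cover_ses φ
      have hPE : PP (n+1) E := by rw [hEq]; exact PP.prod hT.PP PP.of_proj
      have hL : PP (n+1) L := PP.kernel hses hPE hM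
      have := hL.1
      have hL' : PP n L := by
        refine ⟨hL.1, hL.2.1.drop ?_, hL.2.2⟩
        intro x
        obtain ⟨z, rfl⟩ := ex1 hses x (hM.2.1 _ (by omega) _ _)
        obtain ⟨w, hw⟩ := hφ (pre i1 z)
        rw [← hg, ← pre_pre] at hw
        have : z = pre g w := by rw [← hsplit z, ← hw, hsplit]
        rw [this, pre_pre_zero hses]
      exact hX.summand_closed T F (hEq ▸ hX.ext_closed L E M f g hses (hsub L hL') hMX)
    intro N hN
    refine filt (n := n+1) ⟨hX.iso_closed, hX.summand_closed, hX.ext_closed⟩ hX.proj_mem ?_ hN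
    intro j hj
    rcases Nat.lt_or_ge j n with hjn | hjn
    · obtain ⟨T', hT'⟩ := hCh (j+1) (by omega)
      exact ⟨T', hsub T' (hT'.PP.mono (by omega)), hT'⟩
    · obtain rfl : j = n := by omega
      exact ⟨T, hTX, hT⟩

theorem res_kill {Y : ModuleCat.{u} R} {i : ℕ} (hs : s ∈ IsLocalRing.maximalIdeal R) (x : Ext (residueMod R) Y i) :
    s • x = 0 := by
  rw [smul_eq_pre]
  have : (s • LinearMap.id : residueMod R →ₗ[R] residueMod R) = 0 := by
    ext y
    change s • (y : IsLocalRing.ResidueField R) = 0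
    rw [Algebra.smul_def]
    have h3 : algebraMap R (IsLocalRing.ResidueField R) s = 0 := Ideal.Quotient.eq_zero_iff_mem.mpr hs
    rw [h3, zero_mul]
  rw [this, zero_pre]

theorem Wn {t : ℕ} (hK : ∀ i < t, ∀ x : Ext (residueMod R) (ModuleCat.of R R) i, x = 0)
    (hKt : ∃ x : Ext (residueMod R) (ModuleCat.of R R) t, x ≠ 0) (s : ℕ) (hs : s + n = t)
    {M K F0 : ModuleCat.{u} R} {d : K →ₗ[R] F0} {p : F0 →ₗ[R] M} (h : IsSES d p)
    [Module.Finite R K] [Module.Finite R F0] [Module.Free R F0]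
    (hM : PdLT (n+2) M) (hM' : ¬ PdLT (n+1) M) :
    ∃ x : Ext (residueMod R) K s, x ≠ 0 ∧ post d x = 0 := by
  induction n generalizing s M K F0 with
  | zero =>
    obtain rfl : s = t := by omega
    obtain ⟨ξ, hξ⟩ := hKt
    obtain ⟨_, e, ψ, he, hχ⟩ := exists_e h hM hM'
    let ε : ModuleCat.of R R →ₗ[R] K := LinearMap.toSpanSingleton R K e
    have hε : ε (1 : R) = e := one_smul R e
    refine ⟨post ε ξ, ?_, ?_⟩
    · intro h0
      apply hξ
      have h1 := post_post (W := ModuleCat.of R R) ε ψ ξ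
      rw [h0, post_zero] at h1
      rw [← post_id ξ, h1]
      have h2 : (LinearMap.id : R →ₗ[R] R) = ψ ∘ₗ ε := by
        ext
        change (1 : R) = ψ (ε (1 : R))
        rw [hε, he]
      exact congrArg (fun t : R →ₗ[R] R => post (Y := ModuleCat.of R R) (Z := ModuleCat.of R R) t ξ) h2
    · apply ext_free_test
      intro χ
      have h2 := post_post (W := ModuleCat.of R R) d χ (post ε ξ)
      have h3 := post_post (W := ModuleCat.of R R) ε (χ ∘ₗ d) ξ
      rw [h2, h3]
      have h4 : ((χ ∘ₗ d) ∘ₗ ε : R →ₗ[R] R) = χ (d e) • LinearMap.id := by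
        ext
        change χ (d (ε (1 : R))) = χ (d e) * 1
        rw [hε, mul_one]
      have h5 := smul_eq_post (χ (d e)) ξ
      rw [res_kill (hχ χ)] at h5
      rw [h5]
      exact congrArg (fun t : R →ₗ[R] R => post (Y := ModuleCat.of R R) (Z := ModuleCat.of R R) t ξ) h4
  | succ n ih =>
    obtain ⟨F1, K1, d1, p1, _, _, _, h1⟩ := exists_cover K
    obtain ⟨x, hx0, hx⟩ := ih (s+1) (by omega) h1 (PdLT.left h (PdLT.of_proj.mono (by omega)) hM)
      (fun h2 => hM' (PdLT.right h h2 (PdLT.of_proj.mono (by omega))))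
    obtain ⟨z, rfl⟩ := cex1 h1 x hx
    refine ⟨z, ?_, ext_free_zero (hK s (by omega)) _⟩
    rintro rfl
    apply hx0
    simp [cdl]

theorem pd_le {t : ℕ} (hK : ∀ i < t, ∀ x : Ext (residueMod R) (ModuleCat.of R R) i, x = 0)
    (hKt : ∃ x : Ext (residueMod R) (ModuleCat.of R R) t, x ≠ 0) (a : ℕ) (M : ModuleCat.{u} R) [Module.Finite R M]
    (hM : PdLT (t+2+a) M) : PdLT (t+1+a) M := by
  induction a generalizing M with
  | zero =>
    by_contra hM'
    obtain ⟨F1, K1, d1, p1, _, _, _, h1⟩ := exists_cover M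
    obtain ⟨x, hx0, hx⟩ := Wn hK hKt 0 (zero_add t) h1 hM hM'
    obtain ⟨v, rfl⟩ := hm_surj x
    rw [post_hm, ← hm_zero] at hx
    apply hx0
    rw [← hm_zero]
    congr 1
    ext y
    apply h1.1
    have := LinearMap.congr_fun (hm_inj hx) y
    exact this.trans (map_zero d1).symm
  | succ a ih =>
    obtain ⟨F1, K1, d1, p1, _, _, _, h1⟩ := exists_cover M
    have := ih K1 (PdLT.left h1 (PdLT.of_proj.mono (by omega)) hM)
    exact PdLT.right h1 this (PdLT.of_proj.mono (by omega))

theorem PP_le {t : ℕ} (hK : ∀ i < t, ∀ x : Ext (residueMod R) (ModuleCat.of R R) i, x = 0)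
    (hKt : ∃ x : Ext (residueMod R) (ModuleCat.of R R) t, x ≠ 0) (M : ModuleCat.{u} R)
    (hM : PP n M) : PP t M := by
  have := hM.1
  refine ⟨hM.1, ?_, hM.2.2⟩
  have h1 : ∀ a, PdLT (t+1+a) M → PdLT (t+1) M := by
    intro a
    induction a with
    | zero => exact id
    | succ a ih => exact fun h => ih (pd_le hK hKt a M (h.mono (by omega)))
  exact h1 n (hM.2.1.mono (by omega))

end Helpers6
end ResolvPaper

namespace ResolvPaper
section Helpers7
set_option linter.unusedSectionVars false
open Abelian
variable {R : Type u} [CommRing R] [IsLocalRing R] [IsNoetherianRing R]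

theorem depth_ext {t : ℕ} (hdepth : depthE R (IsLocalRing.maximalIdeal R) R = (t : ℕ∞)) :
    (∀ i < t, ∀ x : Ext (residueMod R) (ModuleCat.of R R) i, x = 0) ∧
    (∃ x : Ext (residueMod R) (ModuleCat.of R R) t, x ≠ 0) := by
  have hfin : Module.Finite R (ModuleCat.of R R) := by change Module.Finite R R; infer_instance
  have hfk : Module.Finite R (residueMod R) := by
    change Module.Finite R (R ⧸ IsLocalRing.maximalIdeal R); infer_instance
  have hlt : IsLocalRing.maximalIdeal R • (⊤ : Submodule R (ModuleCat.of R R)) < ⊤ := by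
    have : IsLocalRing.maximalIdeal R • (⊤ : Submodule R R) < ⊤ := by
      rw [smul_eq_mul, Ideal.mul_top, lt_top_iff_ne_top]
      exact (IsLocalRing.maximalIdeal.isMaximal R).ne_top
    exact this
  have hsupp : Module.support R (residueMod R) = PrimeSpectrum.zeroLocus (IsLocalRing.maximalIdeal R) := by
    change Module.support R (R ⧸ IsLocalRing.maximalIdeal R) = _
    rw [Module.support_eq_zeroLocus, Ideal.annihilator_quotient]
  have hreg : ∀ rs : List R, (∀ r ∈ rs, r ∈ IsLocalRing.maximalIdeal R) →
      RingTheory.Sequence.IsWeaklyRegular R rs → RingTheory.Sequence.IsRegular R rs := by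
    intro rs h1 h2
    exact (IsLocalRing.isRegular_iff_isWeaklyRegular_of_subset_maximalIdeal h1).mpr h2
  have hle : ∀ rs : List R, (∀ r ∈ rs, r ∈ IsLocalRing.maximalIdeal R) →
      RingTheory.Sequence.IsWeaklyRegular R rs → rs.length ≤ t := by
    intro rs h1 h2
    have : (rs.length : ℕ∞) ≤ depthE R (IsLocalRing.maximalIdeal R) R := le_sSup ⟨rs, h1, h2, rfl⟩
    rw [hdepth] at this
    exact_mod_cast this
  have hex : ∃ rs : List R, (∀ r ∈ rs, r ∈ IsLocalRing.maximalIdeal R) ∧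
      RingTheory.Sequence.IsWeaklyRegular R rs ∧ rs.length = t := by
    by_contra hno
    push Not at hno
    have h1 : depthE R (IsLocalRing.maximalIdeal R) R ≤ ((t - 1 : ℕ) : ℕ∞) := by
      apply sSup_le
      rintro _ ⟨rs, h1, h2, rfl⟩
      have := hle rs h1 h2
      have := hno rs h1 h2
      exact_mod_cast (by omega : rs.length ≤ t - 1)
    have h2 := hno [] (by simp) (RingTheory.Sequence.IsWeaklyRegular.nil R R)
    rw [hdepth] at h1
    have h3 : t ≤ t - 1 := by exact_mod_cast h1
    simp at h2
    omega
  constructor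
  · obtain ⟨rs, h1, h2, h3⟩ := hex
    intro i hi x
    have := ModuleCat.subsingleton_ext_of_exists_isRegular (IsLocalRing.maximalIdeal R) (residueMod R) hsupp.subset
      (ModuleCat.of R R) hlt rs h1 (hreg rs h1 h2) i (by omega)
    exact Subsingleton.elim _ _
  · by_contra hno
    push Not at hno
    have h0 : ∀ i < t + 1, Subsingleton (Ext (residueMod R) (ModuleCat.of R R) i) := by
      intro i hi
      rcases Nat.lt_or_ge i t with h | h
      · obtain ⟨rs, h1, h2, h3⟩ := hex
        exact ModuleCat.subsingleton_ext_of_exists_isRegular (IsLocalRing.maximalIdeal R) (residueMod R) hsupp.subset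
          (ModuleCat.of R R) hlt rs h1 (hreg rs h1 h2) i (by omega)
      · obtain rfl : i = t := by omega
        exact ⟨fun x y => by rw [hno x, hno y]⟩
    obtain ⟨rs, h1, h2, h3⟩ := ModuleCat.exists_isRegular_of_exists_subsingleton_ext (IsLocalRing.maximalIdeal R) (t+1)
      (ModuleCat.of R R) hlt (residueMod R) hsupp h0
    have := hle rs h2 h3.toIsWeaklyRegular
    omega

end Helpers7
end ResolvPaper

namespace ResolvPaper
section Helpers8
set_option linter.unusedSectionVars false
open Abelian
variable {R : Type u} [CommRing R] [IsLocalRing R]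

theorem Ch.iso {j : ℕ} {T T2 : ModuleCat.{u} R} (h : Ch j T) (q : T ≃ₗ[R] T2) : Ch j T2 := by
  cases j with
  | zero => exact ⟨q.symm.trans h.some⟩
  | succ j =>
    obtain ⟨T', H, f, g, h1, h2, h3, h4, h5⟩ := h
    refine ⟨T', H, f, q.toLinearMap ∘ₗ g, h1, h2, h3, ⟨h4.1, ?_, ?_⟩, h5⟩
    · exact q.surjective.comp h4.2.1
    · rw [h4.2.2, LinearEquiv.ker_comp]

/-- peeling off the last syzygy -/
theorem IsMinSyz.peel {n : ℕ} {M K : ModuleCat.{u} R} (h : IsMinSyz R (n+1) M K) :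
    ∃ (K'' G : ModuleCat.{u} R) (i : K →ₗ[R] G) (q : G →ₗ[R] K''), IsMinSyz R n M K'' ∧
      Module.Finite R G ∧ Module.Free R G ∧ IsSES i q ∧
      LinearMap.ker q ≤ (IsLocalRing.maximalIdeal R) • (⊤ : Submodule R G) := by
  induction n generalizing M with
  | zero =>
    obtain ⟨F, g, K', i, h1, h2, h3, h4, h5, h6, ⟨e⟩⟩ := h
    refine ⟨M, F, i ∘ₗ e.toLinearMap, g, ⟨LinearEquiv.refl _ _⟩, h1, h2, ⟨h5.comp e.injective, h3, ?_⟩, h4⟩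
    rw [← h6, LinearMap.range_comp, LinearEquiv.range, Submodule.map_top]
  | succ n ih =>
    obtain ⟨F, g, K', i, h1, h2, h3, h4, h5, h6, h7⟩ := h
    obtain ⟨K'', G, i', q, h8, h9⟩ := ih h7
    exact ⟨K'', G, i', q, ⟨F, g, K', i, h1, h2, h3, h4, h5, h6, h8⟩, h9⟩

theorem IsMinSyz.ext_zero {n t : ℕ} {M K : ModuleCat.{u} R} (h : IsMinSyz R n M K)
    (hM : ∀ i < t, ∀ x : Ext M (ModuleCat.of R R) i, x = 0) (i : ℕ) (hi : i + 1 + n < t)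
    (x : Ext K (ModuleCat.of R R) (i+1)) : x = 0 := by
  induction n generalizing K i with
  | zero =>
    obtain ⟨e⟩ := h
    have h1 : (e.symm.toLinearMap ∘ₗ e.toLinearMap : K →ₗ[R] K) = LinearMap.id := by ext; simp
    rw [← pre_id x, ← h1, ← pre_pre, hM _ (by omega) (pre e.symm.toLinearMap x), pre_zero]
  | succ n ih =>
    obtain ⟨K'', G, i', q, h8, _, _, h9, _⟩ := h.peel
    obtain ⟨z, rfl⟩ := ex1 h9 x (ih h8 (i+1) (by omega) _)
    rw [ext_proj z, pre_zero]

theorem free_rank_one {F : Type u} [AddCommGroup F] [Module R F] [Module.Finite R F] [Module.Free R F]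
    (x : F) (hx : ∀ y, ∃ c : R, c • x = y) (hx0 : x ≠ 0) : Nonempty (F ≃ₗ[R] R) := by
  have h1 := finrank_le_one x hx
  have : Nontrivial F := ⟨x, 0, hx0⟩
  have h2 : Module.finrank R F ≠ 0 := by
    intro h
    rw [Module.finrank_eq_zero_iff_of_free] at h
    exact not_subsingleton F h
  exact ⟨LinearEquiv.ofFinrankEq F R (by rw [Module.finrank_self]; omega)⟩

theorem smul_top_functional {F : Type u} [AddCommGroup F] [Module R F] (I : Ideal R) (x : F)
    (hx : x ∈ I • (⊤ : Submodule R F)) (χ : F →ₗ[R] R) : χ x ∈ I := by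
  have : (I • (⊤ : Submodule R F)) ≤ Submodule.comap χ I := by
    rw [Submodule.smul_le]
    intro r hr n _
    change χ (r • n) ∈ I
    rw [map_smul]
    exact Ideal.mul_mem_right _ _ hr
  exact this hx

theorem dual_eval {F : Type u} [AddCommGroup F] [Module R F] [Module.Finite R F] [Module.Free R F]
    (φ : Module.Dual R F →ₗ[R] R) : ∃ v : F, ∀ χ : F →ₗ[R] R, φ χ = χ v := by
  obtain ⟨v, rfl⟩ := (Module.evalEquiv R F).surjective φ
  exact ⟨v, fun χ => by simp⟩

/-- factoring a functional through a surjection -/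
theorem factor_surj {A B C D : Type u} [AddCommGroup A] [Module R A] [AddCommGroup B] [Module R B]
    [AddCommGroup C] [Module R C] [AddCommGroup D] [Module R D]
    {d : A →ₗ[R] B} {e : B →ₗ[R] C} (he : Function.Surjective e) (hde : LinearMap.range d = LinearMap.ker e)
    (v : B →ₗ[R] D) (hv : v ∘ₗ d = 0) : ∃ w : C →ₗ[R] D, w ∘ₗ e = v := by
  have hk : LinearMap.ker e ≤ LinearMap.ker v := by
    rw [← hde]
    rintro _ ⟨x, rfl⟩
    exact LinearMap.congr_fun hv x
  refine ⟨(LinearMap.ker e).liftQ v hk ∘ₗ (e.quotKerEquivOfSurjective he).symm.toLinearMap, ?_⟩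
  ext x
  have : (e.quotKerEquivOfSurjective he).symm (e x) = (LinearMap.ker e).mkQ x := by
    rw [LinearEquiv.symm_apply_eq]
    simp
  simp [this]

theorem ch_build {F1 F0 : Type u} [AddCommGroup F1] [Module R F1] [AddCommGroup F0] [Module R F0]
    [Module.Finite R F1] [Module.Free R F1] [Module.Finite R F0] [Module.Free R F0] (d : F1 →ₗ[R] F0) (j : ℕ)
    (h0 : Ch j (ModuleCat.of R (LinearMap.range d.dualMap)))
    (h1 : ∀ v : F0, (∀ χ : F0 →ₗ[R] R, χ ∘ₗ d = 0 → χ v = 0) →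
      (j = 0 → ∀ χ : F0 →ₗ[R] R, χ v ∈ IsLocalRing.maximalIdeal R) → ∃ u, d u = v)
    (h2 : j = 0 → ∀ (χ : F0 →ₗ[R] R) u, χ (d u) ∈ IsLocalRing.maximalIdeal R) :
    Ch (j+1) (ModuleCat.of R (Module.Dual R F1 ⧸ LinearMap.range d.dualMap)) := by
  refine ⟨ModuleCat.of R (LinearMap.range d.dualMap), ModuleCat.of R (Module.Dual R F1),
    (LinearMap.range d.dualMap).subtype, (LinearMap.range d.dualMap).mkQ, h0, ?_, ?_, 
    ⟨Subtype.val_injective, Submodule.mkQ_surjective _, by simp⟩, ?_, ?_⟩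
  · change Module.Finite R (Module.Dual R F1); infer_instance
  · change Module.Free R (Module.Dual R F1); infer_instance
  · intro φ hφ
    change LinearMap.range d.dualMap →ₗ[R] R at φ
    obtain ⟨v, hv⟩ := dual_eval (φ ∘ₗ d.dualMap.rangeRestrict)
    obtain ⟨u, hu⟩ := h1 v (by
      intro χ hχ
      rw [← hv χ, LinearMap.comp_apply]
      have : d.dualMap.rangeRestrict χ = 0 := Subtype.ext hχ
      rw [this, map_zero]) (by
      intro hj χ
      rw [← hv χ]
      exact hφ hj _)
    refine ⟨Module.Dual.eval R F1 u, ?_⟩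
    ext ⟨x, χ, rfl⟩
    have h3 := hv χ
    change χ (d u) = φ (d.dualMap.rangeRestrict χ)
    rw [hu]
    exact h3.symm
  · intro hj ψ x
    change Module.Dual R F1 →ₗ[R] R at ψ
    obtain ⟨x, χ, rfl⟩ := x
    obtain ⟨u, hu⟩ := dual_eval ψ
    have h3 : ψ (d.dualMap χ) = χ (d u) := hu _
    change ψ (d.dualMap χ) ∈ _
    rw [h3]
    exact h2 hj χ u

theorem trCh {t : ℕ} (hk : ∀ i < t, ∀ x : Ext (residueMod R) (ModuleCat.of R R) i, x = 0)
    (j : ℕ) (hj : j < t) (K : ModuleCat.{u} R) (hK : IsMinSyz R j (residueMod R) K)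
    (F1 F0 : Type u) [AddCommGroup F1] [Module R F1] [AddCommGroup F0] [Module R F0]
    [Module.Finite R F1] [Module.Free R F1] [Module.Finite R F0] [Module.Free R F0] (d : F1 →ₗ[R] F0)
    (e : F0 →ₗ[R] K) (he : Function.Surjective e) (hde : LinearMap.range d = LinearMap.ker e)
    (hmin : LinearMap.ker e ≤ (IsLocalRing.maximalIdeal R) • (⊤ : Submodule R F0)) :
    Ch (j+1) (ModuleCat.of R (Module.Dual R F1 ⧸ LinearMap.range d.dualMap)) := by
  induction j generalizing K F1 F0 with
  | zero =>
    obtain ⟨ι⟩ := hK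
    have hkill : ∀ s ∈ IsLocalRing.maximalIdeal R, ∀ y : K, s • y = 0 := by
      intro s hs y
      apply ι.injective
      rw [map_smul, map_zero]
      change s • (ι y : IsLocalRing.ResidueField R) = 0
      rw [Algebra.smul_def]
      have h3 : algebraMap R (IsLocalRing.ResidueField R) s = 0 := Ideal.Quotient.eq_zero_iff_mem.mpr hs
      rw [h3, zero_mul]
    obtain ⟨x0, hx0⟩ := he (ι.symm (1 : IsLocalRing.ResidueField R))
    have hgen : ∀ y : F0, ∃ c : R, c • x0 = y := by
      have h1 : (⊤ : Submodule R F0) ≤ Submodule.span R {x0} ⊔ (IsLocalRing.maximalIdeal R) • (⊤ : Submodule R F0) := by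
        intro y _
        obtain ⟨c, hc⟩ := Ideal.Quotient.mk_surjective (I := IsLocalRing.maximalIdeal R) (ι (e y))
        have h2 : y - c • x0 ∈ LinearMap.ker e := by
          rw [LinearMap.mem_ker, map_sub, map_smul, hx0, sub_eq_zero]
          apply ι.injective
          rw [map_smul, ι.apply_symm_apply, ← hc]
          change _ = c • (1 : IsLocalRing.ResidueField R)
          rw [Algebra.smul_def, mul_one]
          rfl
        rw [show y = c • x0 + (y - c • x0) by abel]
        exact Submodule.add_mem_sup (Submodule.smul_mem _ _ (Submodule.mem_span_singleton_self x0)) (hmin h2)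
      have h2 := Submodule.le_of_le_smul_of_le_jacobson_bot Module.Finite.fg_top 
        (IsLocalRing.maximalIdeal_le_jacobson _) h1
      intro y
      exact Submodule.mem_span_singleton.mp (h2 (Submodule.mem_top (x := y)))
    obtain ⟨q⟩ := free_rank_one x0 hgen (by
      rintro rfl
      rw [map_zero] at hx0
      have := congrArg ι hx0
      rw [map_zero, ι.apply_symm_apply] at this
      exact zero_ne_one (α := IsLocalRing.ResidueField R) this)
    have hinj : Function.Injective d.dualMap := by
      rw [injective_iff_map_eq_zero]
      intro χ hχ
      obtain ⟨w, hw⟩ := factor_surj he hde χ hχ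
      have h1 : hm (Y := ModuleCat.of R R) (w ∘ₗ ι.symm.toLinearMap) = 0 := hk 0 hj _
      rw [← hm_zero] at h1
      have h2 := hm_inj h1
      rw [← hw]
      have h3 : w = 0 := by
        ext y
        have := LinearMap.congr_fun h2 (ι y)
        have h4 : w (ι.symm (ι y)) = 0 := this
        rw [ι.symm_apply_apply] at h4
        exact h4
      rw [h3, LinearMap.zero_comp]
    apply ch_build
    · exact ⟨(LinearEquiv.ofInjective d.dualMap hinj).symm.trans (q.symm.dualMap.trans (LinearMap.ringLmapEquivSelf R R R))⟩
    · intro v _ hv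
      have : v ∈ LinearMap.range d := by
        rw [hde, LinearMap.mem_ker]
        have h1 : v = q v • q.symm 1 := by
          apply q.injective
          rw [map_smul, q.apply_symm_apply, smul_eq_mul, mul_one]
        rw [h1, map_smul]
        exact hkill _ (hv rfl q.toLinearMap) _
      exact this
    · intro _ χ u
      refine smul_top_functional _ _ (hmin ?_) χ
      rw [← hde]
      exact LinearMap.mem_range_self d u
  | succ j ih =>
    obtain ⟨K'', G, i, q, hK'', _, _, hs, hGmin⟩ := hK.peel
    have h1 := ih (by omega) K'' hK'' F0 G (i ∘ₗ e) q hs.2.1 (by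
      rw [← hs.2.2, LinearMap.range_comp, LinearMap.range_eq_top.mpr he, Submodule.map_top]) hGmin
    have hker : LinearMap.ker d.dualMap = LinearMap.range (i ∘ₗ e).dualMap := by
      apply le_antisymm
      · intro χ hχ
        obtain ⟨w, hw⟩ := factor_surj he hde χ hχ
        have h2 : dlt hs (hm (Y := ModuleCat.of R R) w) = 0 := hK''.ext_zero hk 0 (by omega) _
        obtain ⟨z, hz⟩ := ex1 hs _ h2
        obtain ⟨ψ, rfl⟩ := hm_surj z
        rw [pre_hm] at hz
        have h3 := hm_inj hz
        refine ⟨ψ, ?_⟩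
        rw [← hw, ← h3]
        rfl
      · rintro _ ⟨ψ, rfl⟩
        rw [LinearMap.mem_ker]
        ext x
        have : d x ∈ LinearMap.ker e := hde ▸ LinearMap.mem_range_self d x
        change ψ (i (e (d x))) = 0
        rw [LinearMap.mem_ker.mp this, map_zero, map_zero]
    apply ch_build
    · refine h1.iso ?_
      exact (Submodule.quotEquivOfEq _ _ hker.symm).trans d.dualMap.quotKerEquivRange
    · intro v hv _
      have : v ∈ LinearMap.range d := by
        rw [hde, LinearMap.mem_ker]
        apply hs.1
        rw [map_zero]
        apply free_eq_of_functionals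
        intro ψ
        rw [map_zero]
        refine hv (ψ ∘ₗ i ∘ₗ e) ?_
        ext x
        have : d x ∈ LinearMap.ker e := hde ▸ LinearMap.mem_range_self d x
        change ψ (i (e (d x))) = 0
        rw [LinearMap.mem_ker.mp this, map_zero, map_zero]
      exact this
    · intro h; omega

theorem trOmega_ch {t : ℕ} (hk : ∀ i < t, ∀ x : Ext (residueMod R) (ModuleCat.of R R) i, x = 0)
    (j : ℕ) (hj : j < t) (T : ModuleCat.{u} R) (hT : IsTrOmega R j (residueMod R) T) : Ch (j+1) T := by
  obtain ⟨K, hK, F1, F0, d, e, _, _, _, _, h1, h2, h3, _, ⟨q⟩⟩ := hT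
  exact (trCh hk j hj K hK F1 F0 d e h1 h2 h3).iso q.symm

end Helpers8
end ResolvPaper

namespace ResolvPaper
section Helpers9
set_option linter.unusedSectionVars false
open Abelian
variable {R : Type u} [CommRing R]

theorem retract_equiv {M N : Type u} [AddCommGroup M] [Module R M] [AddCommGroup N] [Module R N]
    (a : N →ₗ[R] M) (b : M →ₗ[R] N) (hab : b ∘ₗ a = LinearMap.id) : Nonempty (M ≃ₗ[R] (N × LinearMap.ker b)) := by
  have h : ∀ x, b (a x) = x := fun x => LinearMap.congr_fun hab x
  refine ⟨LinearEquiv.symm (LinearEquiv.ofBijective (LinearMap.coprod a (LinearMap.ker b).subtype) ⟨?_, ?_⟩)⟩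
  · rw [injective_iff_map_eq_zero]
    rintro ⟨x, y, hy⟩ hxy
    simp only [LinearMap.coprod_apply, Submodule.subtype_apply] at hxy
    have h1 := congrArg b hxy
    rw [map_add, h, LinearMap.mem_ker.mp hy, add_zero, map_zero] at h1
    subst h1
    rw [map_zero, zero_add] at hxy
    subst hxy
    rfl
  · intro x
    refine ⟨(b x, ⟨x - a (b x), ?_⟩), ?_⟩
    · rw [LinearMap.mem_ker, map_sub, h, sub_self]
    · simp

variable {𝒳 : Set (ModuleCat.{u} R)} (hX : IsExtClosed R 𝒳)

theorem IsExtClosed.retract (hX : IsExtClosed R 𝒳) {M N : ModuleCat.{u} R} (hM : M ∈ 𝒳) (a : N →ₗ[R] M) (b : M →ₗ[R] N)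
    (hab : b ∘ₗ a = LinearMap.id) : N ∈ 𝒳 := by
  obtain ⟨q⟩ := retract_equiv a b hab
  exact hX.2.1 N (ModuleCat.of R (LinearMap.ker b)) (hX.1 M _ ⟨q⟩ hM)

variable [IsLocalRing R]

theorem IsExtClosed.free (hX : IsExtClosed R 𝒳) (hR : ModuleCat.of R R ∈ 𝒳) (m : ℕ) :
    ModuleCat.of R (Fin m → R) ∈ 𝒳 := by
  induction m with
  | zero =>
    refine hX.retract hR (0 : (Fin 0 → R) →ₗ[R] R) (0 : R →ₗ[R] (Fin 0 → R)) ?_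
    apply LinearMap.ext
    intro x
    exact Subsingleton.elim (α := Fin 0 → R) _ _
  | succ m ih =>
    have h1 : ModuleCat.of R (R × (Fin m → R)) ∈ 𝒳 :=
      hX.2.2 _ _ _ _ _ (prod_ses (ModuleCat.of R R) (ModuleCat.of R (Fin m → R))) hR ih
    exact hX.1 _ _ ⟨Fin.consLinearEquiv R (fun _ : Fin (m+1) => R)⟩ h1

theorem IsExtClosed.proj (hX : IsExtClosed R 𝒳) (hR : ModuleCat.of R R ∈ 𝒳) (M : ModuleCat.{u} R)
    (_ : Module.Finite R M) (_ : Module.Projective R M) : M ∈ 𝒳 := by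
  have : Module.Free R M := Module.free_of_flat_of_isLocalRing
  exact hX.1 _ _ ⟨(Module.finBasis R M).equivFun.symm⟩ (hX.free hR _)

theorem PP.pi {n m : ℕ} (T : Fin m → ModuleCat.{u} R) (hT : ∀ i, PP n (T i)) :
    PP n (ModuleCat.of R ((i : Fin m) → T i)) := by
  induction m with
  | zero =>
    have h1 : Module.Finite R (ModuleCat.of R ((i : Fin 0) → T i)) := by
      change Module.Finite R ((i : Fin 0) → T i)
      have := fun i => (hT i).1
      infer_instance
    have h2 : Module.Projective R (ModuleCat.of R ((i : Fin 0) → T i)) := by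
      change Module.Projective R ((i : Fin 0) → T i)
      have : Module.Free R ((i : Fin 0) → T i) := Module.Free.of_subsingleton R _
      infer_instance
    exact PP.of_proj
  | succ m ih =>
    have h1 := PP.prod (hT 0) (ih (fun i => T i.succ) (fun i => hT _))
    exact PP.iso (N := ModuleCat.of R ((i : Fin (m+1)) → T i)) h1 (Fin.consLinearEquiv R (fun i : Fin (m+1) => (T i : Type u)))

variable [IsNoetherianRing R]

theorem exists_ch {t : ℕ} (hk : ∀ i < t, ∀ x : Ext (residueMod R) (ModuleCat.of R R) i, x = 0) (j : ℕ) (hj : j ≤ t) :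
    ∃ T : ModuleCat.{u} R, Ch j T := by
  induction j with
  | zero => exact ⟨ModuleCat.of R R, ⟨LinearEquiv.refl R R⟩⟩
  | succ j ih =>
    obtain ⟨T, hT⟩ := ih (by omega)
    exact hT.exists_next hk (by omega)

theorem PD0n_zero : PD0n R 0 = addR R := by
  ext M
  rw [mem_PD0n]
  constructor
  · intro h
    have := h.1
    have := h.2.1.proj le_rfl
    have : Module.Free R M := Module.free_of_flat_of_isLocalRing
    exact ⟨Module.finrank R M, ModuleCat.of R PUnit.{u+1},
      ⟨(LinearEquiv.prodUnique (R := R) (M := M) (M₂ := PUnit.{u+1})).trans (Module.finBasis R M).equivFun⟩⟩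
  · rintro ⟨n, N, ⟨q⟩⟩
    have h1 : PP 0 (ModuleCat.of R (Fin n → R)) := by
      have : Module.Finite R (ModuleCat.of R (Fin n → R)) := by change Module.Finite R (Fin n → R); infer_instance
      have : Module.Projective R (ModuleCat.of R (Fin n → R)) := by change Module.Projective R (Fin n → R); infer_instance
      exact PP.of_proj
    refine h1.retract (q.toLinearMap ∘ₗ LinearMap.inl R M N) (LinearMap.fst R M N ∘ₗ q.symm.toLinearMap) ?_
    apply LinearMap.ext
    intro x
    change (q.symm (q (x, 0))).1 = x
    rw [q.symm_apply_apply]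

theorem main_aux 
    (t : ℕ) (hdepth : depthE R (IsLocalRing.maximalIdeal R) R = (t : ℕ∞)) :
    (PD0n R 0 = addR R) ∧
    (∀ n : ℕ, n < t → PD0n R n ⊂ PD0n R (n+1)) ∧
    (PD0n R t = PD0 R) ∧
    (∀ n : ℕ, n ≤ t → IsResolving R (PD0n R n)) ∧
    (∀ 𝒳 : Set (ModuleCat.{u} R), IsResolving R 𝒳 → 𝒳 ⊆ PD0 R →
      ∃ n : ℕ, n ≤ t ∧ 𝒳 = PD0n R n) ∧
    (∀ n : ℕ, 1 ≤ n → n ≤ t →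
      (∀ T : ModuleCat.{u} R, IsTrOmega R (n-1) (residueMod R) T →
        PD0n R n = resClosure R {T}) ∧
      (∀ T : Fin n → ModuleCat.{u} R,
        (∀ i : Fin n, IsTrOmega R (i : ℕ) (residueMod R) (T i)) →
        PD0n R n = extClosure R {ModuleCat.of R (R × ((i : Fin n) → ↥(T i)))})) := by
  obtain ⟨hk, hkt⟩ := depth_ext hdepth
  have hPD : PD0n R t = PD0 R := by
    ext M
    rw [mem_PD0n, mem_PD0]
    exact ⟨fun h => ⟨t, h⟩, fun ⟨n, h⟩ => PP_le hk hkt M h⟩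
  have hRfin : Module.Finite R (ModuleCat.of R R) := by change Module.Finite R R; infer_instance
  have hRproj : Module.Projective R (ModuleCat.of R R) := by change Module.Projective R R; infer_instance
  refine ⟨PD0n_zero, ?_, hPD, fun n _ => PD0n_resolving n, ?_, ?_⟩
  · intro n hn
    rw [Set.ssubset_iff_exists]
    refine ⟨fun M hM => ?_, ?_⟩
    · rw [mem_PD0n] at *
      exact hM.mono (by omega)
    · obtain ⟨T, hT⟩ := exists_ch hk (n+1) hn
      refine ⟨T, (mem_PD0n _).mpr hT.PP, fun h => ?_⟩
      rw [mem_PD0n] at h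
      exact hT.not_pd h.2.1
  · intro 𝒳 hX hsub
    classical
    have hex : ∃ n, 𝒳 ⊆ PD0n R n := ⟨t, hPD ▸ hsub⟩
    have hle : Nat.find hex ≤ t := Nat.find_min' hex (hPD ▸ hsub)
    refine ⟨Nat.find hex, hle, ?_⟩
    apply Set.Subset.antisymm (Nat.find_spec hex)
    have hspec := Nat.find_spec hex
    have hmin := fun m => Nat.find_min hex (m := m)
    generalize Nat.find hex = n at *
    intro N hN
    rw [mem_PD0n] at hN
    cases n with
    | zero => exact hX.proj_mem N hN.1 (hN.2.1.proj le_rfl)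
    | succ n =>
      have h1 := hmin n (by omega)
      rw [Set.not_subset] at h1
      obtain ⟨M, hM, hM'⟩ := h1
      have hP := (mem_PD0n _).mp (hspec hM)
      refine Rn hX (fun j hj => exists_ch hk j (by omega)) M hM hP (Or.inr fun h => ?_) N hN
      exact hM' ((mem_PD0n _).mpr ⟨hP.1, h, hP.2.2⟩)
  · intro n hn hnt
    obtain ⟨n, rfl⟩ := Nat.exists_eq_add_of_le' hn
    constructor
    · intro T hT
      have hC := trOmega_ch hk n (by omega) T hT
      apply Set.Subset.antisymm
      · intro N hN
        rw [mem_PD0n] at hN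
        rintro 𝒳 ⟨hX, hTX⟩
        exact Rn hX (fun j hj => exists_ch hk j (by omega)) T (hTX rfl) hC.PP (Or.inr hC.not_pd) N hN
      · apply Set.sInter_subset_of_mem
        refine ⟨PD0n_resolving _, ?_⟩
        rintro _ rfl
        exact (mem_PD0n _).mpr hC.PP
    · intro T hT
      have hC : ∀ i : Fin (n+1), Ch (i+1) (T i) := fun i => trOmega_ch hk i (by omega) _ (hT i)
      apply Set.Subset.antisymm
      · intro N hN
        rw [mem_PD0n] at hN
        rintro 𝒳 ⟨hX, hTX⟩
        have hB := hTX rfl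
        have hR : ModuleCat.of R R ∈ 𝒳 := 
          hX.retract hB (LinearMap.inl R R ((i : Fin (n+1)) → ↥(T i))) (LinearMap.fst R R ((i : Fin (n+1)) → ↥(T i)))
            (LinearMap.fst_comp_inl _ _ _)
        refine filt hX (hX.proj hR) ?_ hN
        intro j hj
        refine ⟨T ⟨j, by omega⟩, ?_, hC ⟨j, by omega⟩⟩
        refine hX.retract hB 
          (LinearMap.inr R R ((i : Fin (n+1)) → ↥(T i)) ∘ₗ LinearMap.single R (fun i : Fin (n+1) => (T i : Type u)) ⟨j, by omega⟩)
          (LinearMap.proj (R := R) (φ := fun i : Fin (n+1) => (T i : Type u)) ⟨j, by omega⟩ ∘ₗ LinearMap.snd R R ((i : Fin (n+1)) → ↥(T i))) ?_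
        apply LinearMap.ext
        intro x
        change (Pi.single (M := fun i : Fin (n+1) => (T i : Type u)) (⟨j, by omega⟩ : Fin (n+1)) x) ⟨j, by omega⟩ = x
        rw [Pi.single_eq_same]
      · apply Set.sInter_subset_of_mem
        have hres := PD0n_resolving (R := R) (n+1)
        refine ⟨⟨hres.iso_closed, hres.summand_closed, hres.ext_closed⟩, ?_⟩
        rintro _ rfl
        rw [mem_PD0n]
        exact PP.prod (A := ModuleCat.of R R) (B := ModuleCat.of R ((i : Fin (n+1)) → ↥(T i))) PP.of_proj
          (PP.pi T (fun i => (hC i).PP.mono (by omega)))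

end Helpers9
end ResolvPaper

namespace ResolvPaper

variable (R : Type u) [CommRing R]

/-- Theorem 1.1: classification of the resolving subcategories contained in `PD_0(R)`
over a noetherian local ring of depth `t`, together with the descriptions
`PD_0^n(R) = res(Tr Ω^{n-1} k) = ext(R ⊕ ⊕_{i=0}^{n-1} Tr Ω^i k)` for `1 ≤ n ≤ t`. -/
theorem classification_of_resolving_subcats_in_PD0
    [IsNoetherianRing R] [IsLocalRing R]
    (t : ℕ) (hdepth : depthE R (IsLocalRing.maximalIdeal R) R = (t : ℕ∞)) :
    (PD0n R 0 = addR R) ∧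
    (∀ n : ℕ, n < t → PD0n R n ⊂ PD0n R (n+1)) ∧
    (PD0n R t = PD0 R) ∧
    (∀ n : ℕ, n ≤ t → IsResolving R (PD0n R n)) ∧
    (∀ 𝒳 : Set (ModuleCat.{u} R), IsResolving R 𝒳 → 𝒳 ⊆ PD0 R →
      ∃ n : ℕ, n ≤ t ∧ 𝒳 = PD0n R n) ∧
    (∀ n : ℕ, 1 ≤ n → n ≤ t →
      (∀ T : ModuleCat.{u} R, IsTrOmega R (n-1) (residueMod R) T →
        PD0n R n = resClosure R {T}) ∧
      (∀ T : Fin n → ModuleCat.{u} R,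
        (∀ i : Fin n, IsTrOmega R (i : ℕ) (residueMod R) (T i)) →
        PD0n R n = extClosure R {ModuleCat.of R (R × ((i : Fin n) → ↥(T i)))})) :=
  main_aux t hdepth

end ResolvPaper
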